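/- arXiv:1701.01314 — 4 statements merged into one kernel-verified Lean document; each statement's English description precedes it below -/
import Mathlib

section
/- Let k be a field and X a ring scheme over k whose underlying scheme is of finite type over k and whose underlying topological space is connected. Then X is an affine scheme. (Theorem 2.4 of the paper.) -/
section
open AlgebraicGeometry CategoryTheory Limits MonoidalCategory CartesianMonoidalCategory

namespace RingSch

lemma isPushout_appTop {k : Type} [Field k] {X Y Z : Scheme.{0}} {g : Y ⟶ X} {iY : Y ⟶ Z}
    {iX : X ⟶ Spec (.of k)} {f : Z ⟶ Spec (.of k)} (H : IsPullback g iY iX f)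
    [QuasiCompact iX] [QuasiSeparated iX] [QuasiCompact f] [QuasiSeparated f] :
    IsPushout iX.appTop f.appTop g.appTop iY.appTop := by
  have hX : CompactSpace X := QuasiCompact.compactSpace_of_compactSpace iX
  have hZ : CompactSpace Z := QuasiCompact.compactSpace_of_compactSpace f
  have hX' : QuasiSeparatedSpace X := quasiSeparatedSpace_of_quasiSeparated iX
  have hZ' : QuasiSeparatedSpace Z := quasiSeparatedSpace_of_quasiSeparated f
  have hfl : (iX.appLE ⊤ ⊤ le_top).hom.Flat := by
    have hF : IsField Γ(Spec (.of k), ⊤) :=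
      MulEquiv.isField (Field.toIsField k) (Scheme.ΓSpecIso (.of k)).commRingCatIsoToRingEquiv.toMulEquiv
    let := hF.toField
    rw [RingHom.Flat]
    algebraize [(iX.appLE ⊤ ⊤ le_top).hom]
    exact Module.Flat.of_free
  have := (isIso_pushoutSection_iff _ _ _ _).mp
    (isIso_pushoutSection_of_isCompact_of_flat_right_of_ringHomFlat (US := ⊤) (UT := ⊤)
    (UX := ⊤) (UY := ⊤) H le_top le_top (by simp) (isAffineOpen_top _) isCompact_univ
    isQuasiSeparated_univ isCompact_univ isQuasiSeparated_univ hfl)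
  have e {A B : Scheme.{0}} (g : A ⟶ B) : g.appLE ⊤ ⊤ le_top = g.appTop := by
    simp only [Scheme.Hom.appLE]
    exact (congrArg _ (A.presheaf.map_id _)).trans (Category.comp_id g.appTop)
  exact e iX ▸ e f ▸ e g ▸ e iY ▸ this

section defs
variable {S : Scheme.{0}}

def GIso {Y Z : Over S} (g : Y ⟶ Z) : Prop := IsIso g.left.appTop

lemma GIso.ext {Y Z U : Over S} {g : Y ⟶ Z} (hg : GIso g) [IsAffine U.left]
    {a b : Z ⟶ U} (h : g ≫ a = g ≫ b) : a = b := by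
  have : IsIso g.left.appTop := hg
  ext1
  apply ext_of_isAffine
  have := congr(($h).left.appTop)
  rwa [Over.comp_left, Over.comp_left, Scheme.Hom.comp_appTop, Scheme.Hom.comp_appTop,
    cancel_mono] at this

lemma GIso.exists_extend {Y Z U : Over S} {g : Y ⟶ Z} (hg : GIso g) [IsAffine S] [IsAffine U.left]
    (c : Y ⟶ U) : ∃ d : Z ⟶ U, g ≫ d = c := by
  have : IsIso g.left.appTop := hg
  let d' : Z.left ⟶ U.left := Z.left.toSpecΓ ≫ Spec.map (c.left.appTop ≫ inv g.left.appTop) ≫ U.left.isoSpec.inv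
  have h1 : g.left ≫ d' = c.left := by
    dsimp only [d']
    rw [← Category.assoc, Scheme.toSpecΓ_naturality]
    simp only [Category.assoc]
    rw [← Spec.map_comp_assoc, Category.assoc, IsIso.inv_hom_id, Category.comp_id,
      ← Scheme.toSpecΓ_naturality_assoc]
    simp [Scheme.isoSpec]
  refine ⟨Over.homMk d' ?_, by ext1; simpa⟩
  apply ext_of_isAffine
  rw [← cancel_mono g.left.appTop, ← Scheme.Hom.comp_appTop, ← Scheme.Hom.comp_appTop, reassoc_of% h1]
  simp
end defs


section field
variable {k : Type} [Field k]

lemma GIso.tensor {Y₁ Z₁ Y₂ Z₂ : Over (Spec (.of k))} {g₁ : Y₁ ⟶ Z₁} {g₂ : Y₂ ⟶ Z₂}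
    [QuasiCompact Y₁.hom] [QuasiSeparated Y₁.hom] [QuasiCompact Z₁.hom] [QuasiSeparated Z₁.hom]
    [QuasiCompact Y₂.hom] [QuasiSeparated Y₂.hom] [QuasiCompact Z₂.hom] [QuasiSeparated Z₂.hom]
    (h₁ : GIso g₁) (h₂ : GIso g₂) : GIso (g₁ ⊗ₘ g₂) := by
  have HY := isPushout_appTop (IsPullback.of_hasPullback Y₁.hom Y₂.hom)
  have HZ := isPushout_appTop (IsPullback.of_hasPullback Z₁.hom Z₂.hom)
  have i₁ : IsIso g₁.left.appTop := h₁
  have i₂ : IsIso g₂.left.appTop := h₂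
  have e₁ : (g₁ ⊗ₘ g₂).left ≫ pullback.fst Z₁.hom Z₂.hom = pullback.fst Y₁.hom Y₂.hom ≫ g₁.left :=
    congr(($(tensorHom_fst g₁ g₂)).left)
  have e₂ : (g₁ ⊗ₘ g₂).left ≫ pullback.snd Z₁.hom Z₂.hom = pullback.snd Y₁.hom Y₂.hom ≫ g₂.left :=
    congr(($(tensorHom_snd g₁ g₂)).left)
  have HY' : IsPushout Z₁.hom.appTop Z₂.hom.appTop (g₁.left.appTop ≫ (pullback.fst Y₁.hom Y₂.hom).appTop)
      (g₂.left.appTop ≫ (pullback.snd Y₁.hom Y₂.hom).appTop) := by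
    refine HY.of_iso (Iso.refl _) (asIso g₁.left.appTop).symm (asIso g₂.left.appTop).symm (Iso.refl _) ?_ ?_ ?_ ?_
    · rw [Iso.refl_hom, Category.id_comp, Iso.symm_hom, asIso_inv, IsIso.comp_inv_eq,
        ← Scheme.Hom.comp_appTop, Over.w]
    · rw [Iso.refl_hom, Category.id_comp, Iso.symm_hom, asIso_inv, IsIso.comp_inv_eq,
        ← Scheme.Hom.comp_appTop, Over.w]
    · simp
    · simp
  rw [← Scheme.Hom.comp_appTop, ← Scheme.Hom.comp_appTop, ← e₁, ← e₂, Scheme.Hom.comp_appTop,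
    Scheme.Hom.comp_appTop] at HY'
  have : (g₁ ⊗ₘ g₂).left.appTop = (HZ.isoIsPushout _ _ HY').hom := by
    apply HZ.hom_ext
    · exact (HZ.inl_isoIsPushout_hom ..).symm
    · exact (HZ.inr_isoIsPushout_hom ..).symm
  rw [GIso, this]
  infer_instance

lemma GIso.id {Y : Over (Spec (.of k))} : GIso (𝟙 Y) := by
  rw [GIso, Over.id_left, Scheme.Hom.id_appTop]; infer_instance

lemma GIso.of_isIso {Y Z : Over (Spec (.of k))} (g : Y ⟶ Z) [IsIso g] : GIso g := by
  have : IsIso g.left := inferInstanceAs (IsIso ((Over.forget _).map g))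
  exact inferInstanceAs (IsIso (g.left.app ⊤))

/-- The affinization of `X`. -/
noncomputable abbrev aff (X : Over (Spec (.of k))) : Over (Spec (.of k)) :=
  Over.mk (Spec.map X.hom.appTop ≫ inv (Spec (.of k)).toSpecΓ)

instance (X : Over (Spec (.of k))) : IsAffine (aff X).left := by
  dsimp [aff]; infer_instance

noncomputable def toAff (X : Over (Spec (.of k))) : X ⟶ aff X :=
  Over.homMk X.left.toSpecΓ (by simp [aff, ← Scheme.toSpecΓ_naturality_assoc])

@[simp] lemma toAff_left (X : Over (Spec (.of k))) : (toAff X).left = X.left.toSpecΓ := rfl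

lemma GIso.toAff (X : Over (Spec (.of k))) [CompactSpace X.left] [QuasiSeparatedSpace X.left] :
    GIso (toAff X) := by
  rw [GIso, toAff_left]
  rw [Scheme.toSpecΓ_appTop]
  infer_instance

lemma isAffineHom_of_isAffine (U : Over (Spec (.of k))) [IsAffine U.left] : IsAffineHom U.hom :=
  inferInstance

end field

/-- ring objects in `Over S`, through points -/
class RingPts {S : Scheme.{0}} (X : Over S) where
  ring : ∀ T : Over S, CommRing (T ⟶ X)
  comp_add : ∀ {T T' : Over S} (h : T' ⟶ T) (a b : T ⟶ X), h ≫ (a + b) = h ≫ a + h ≫ b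
  comp_mul : ∀ {T T' : Over S} (h : T' ⟶ T) (a b : T ⟶ X), h ≫ (a * b) = (h ≫ a) * (h ≫ b)
  comp_one : ∀ {T T' : Over S} (h : T' ⟶ T), h ≫ (1 : T ⟶ X) = 1

attribute [reducible, instance] RingPts.ring

namespace RingPts
variable {S : Scheme.{0}} {X : Over S} [RingPts X]

lemma comp_zero {T T' : Over S} (h : T' ⟶ T) : h ≫ (0 : T ⟶ X) = 0 := by
  have := comp_add h (0 : T ⟶ X) 0
  simpa using this

lemma comp_neg {T T' : Over S} (h : T' ⟶ T) (a : T ⟶ X) : h ≫ (-a) = - (h ≫ a) := by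
  rw [eq_neg_iff_add_eq_zero, ← comp_add]; simp [comp_zero]

lemma comp_sub {T T' : Over S} (h : T' ⟶ T) (a b : T ⟶ X) : h ≫ (a - b) = h ≫ a - h ≫ b := by
  rw [sub_eq_add_neg, comp_add, comp_neg, sub_eq_add_neg]

end RingPts

end RingSch

end

section
open AlgebraicGeometry CategoryTheory Limits MonoidalCategory CartesianMonoidalCategory

namespace RingSch

lemma isPullback_left {S : Scheme.{0}} {P A B C : Over S} {f : P ⟶ A} {g : P ⟶ B} {h : A ⟶ C}
    {i : B ⟶ C} (H : IsPullback f g h i) : IsPullback f.left g.left h.left i.left :=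
  H.map (Over.forget S)

section
variable {k : Type} [Field k] {X : Over (Spec (.of k))}

lemma isClosedImmersion_point (x : 𝟙_ (Over (Spec (.of k))) ⟶ X) : IsClosedImmersion x.left :=
  isClosedImmersion_of_comp_eq_id X.hom x.left (Over.w x)

lemma isPullback_diag [RingPts X] : IsPullback (lift (𝟙 X) (𝟙 X)) (toUnit X) (fst X X - snd X X)
    (0 : 𝟙_ _ ⟶ X) := by
  refine ⟨⟨?_⟩, ⟨PullbackCone.IsLimit.mk _ (fun s ↦ s.fst ≫ fst _ _) ?_ ?_ ?_⟩⟩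
  · simp [RingPts.comp_sub, RingPts.comp_zero]
  · intro s
    have := s.condition
    rw [RingPts.comp_sub, RingPts.comp_zero, sub_eq_zero] at this
    ext1 <;> simp [this]
  · intro s
    apply toUnit_unique
  · intro s m hm _
    rw [← hm]; simp

lemma isSeparated_of_ringPts [RingPts X] : IsSeparated X.hom := by
  have := isClosedImmersion_point (0 : 𝟙_ _ ⟶ X)
  constructor
  exact MorphismProperty.of_isPullback (P := @IsClosedImmersion) (isPullback_left (isPullback_diag (X := X))).flip this


lemma exists_lift_of_range_subset {Q C X : Scheme.{0}} [IsReduced Q] (q : Q ⟶ X) (c : C ⟶ X)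
    [IsClosedImmersion c] (h : Set.range q ⊆ Set.range c) : ∃ l : Q ⟶ C, l ≫ c = q := by
  have : Surjective (pullback.fst q c) := by
    constructor
    intro x
    obtain ⟨y, hy⟩ := h ⟨x, rfl⟩
    obtain ⟨z, hz, _⟩ := Scheme.Pullback.exists_preimage_pullback (f := q) (g := c) x y hy.symm
    exact ⟨z, hz⟩
  have : IsIso (pullback.fst q c) := isIso_of_isClosedImmersion_of_surjective _
  exact ⟨inv (pullback.fst q c) ≫ pullback.snd q c, by
    rw [Category.assoc, ← pullback.condition, IsIso.inv_hom_id_assoc]⟩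

lemma exists_lift_over {S : Scheme.{0}} {Q C X : Over S} [IsReduced Q.left] (q : Q ⟶ X) (c : C ⟶ X)
    [IsClosedImmersion c.left] (h : Set.range q.left ⊆ Set.range c.left) :
    ∃ l : Q ⟶ C, l ≫ c = q := by
  obtain ⟨l, hl⟩ := exists_lift_of_range_subset q.left c.left h
  exact ⟨Over.homMk l (by rw [← Over.w c, reassoc_of% hl, Over.w]), by ext1; exact hl⟩

/-- The `k`-morphism from the spectrum of the residue field. -/
noncomputable abbrev resPt {S : Scheme.{0}} (Y : Over S) (p : Y.left) : Over S :=
  Over.mk (Y.left.fromSpecResidueField p ≫ Y.hom)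

noncomputable abbrev resPtMap {S : Scheme.{0}} (Y : Over S) (p : Y.left) : resPt Y p ⟶ Y :=
  Over.homMk (Y.left.fromSpecResidueField p)

instance {S : Scheme.{0}} (Y : Over S) (p : Y.left) : Nonempty (resPt Y p).left :=
  inferInstanceAs (Nonempty (Spec _))

instance {S : Scheme.{0}} (Y : Over S) (p : Y.left) : IsReduced (resPt Y p).left :=
  inferInstanceAs (IsReduced (Spec _))

instance {S : Scheme.{0}} (Y : Over S) (p : Y.left) : IsAffine (resPt Y p).left :=
  inferInstanceAs (IsAffine (Spec _))

lemma resPtMap_apply {S : Scheme.{0}} {Y Z : Over S} (p : Y.left) (g : Y ⟶ Z) (t : (resPt Y p).left) :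
    (resPtMap Y p ≫ g).left t = g.left p := by
  rw [Over.comp_left, Scheme.Hom.comp_apply]
  congr 1
  exact Scheme.fromSpecResidueField_apply _ _

lemma eq_toUnit_comp_of_range {Q : Over (Spec (.of k))} [IsReduced Q.left] (q : Q ⟶ X)
    (x : 𝟙_ _ ⟶ X) (h : Set.range q.left ⊆ Set.range x.left) : q = toUnit Q ≫ x := by
  have := isClosedImmersion_point x
  obtain ⟨l, rfl⟩ := exists_lift_over q x h
  rw [toUnit_unique l (toUnit Q)]

variable [RingPts X]

/-- the point zero -/
noncomputable def zpt (X : Over (Spec (.of k))) [RingPts X] : X.left :=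
  (0 : 𝟙_ _ ⟶ X).left (IsLocalRing.closedPoint k)

lemma zero_left_apply {Q : Over (Spec (.of k))} (t : Q.left) : (0 : Q ⟶ X).left t = zpt X := by
  rw [← RingPts.comp_zero (toUnit Q), Over.comp_left, Scheme.Hom.comp_apply, zpt]
  congr 1
  exact Subsingleton.elim (α := Spec (.of k)) _ _

lemma range_zero_left : Set.range (0 : 𝟙_ _ ⟶ X).left = {zpt X} := by
  ext a
  constructor
  · rintro ⟨t, rfl⟩
    exact zero_left_apply t
  · rintro rfl
    exact ⟨_, rfl⟩

lemma eq_zero_of_range {Q : Over (Spec (.of k))} [IsReduced Q.left] (q : Q ⟶ X)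
    (h : ∀ t, q.left t = zpt X) : q = 0 := by
  rw [eq_toUnit_comp_of_range q 0, RingPts.comp_zero]
  rw [range_zero_left]
  rintro _ ⟨t, rfl⟩
  exact h t

lemma mul_eq_zero_of_affine [QuasiCompact X.hom] {T : Over (Spec (.of k))} [IsAffine T.left] (a : T ⟶ X)
    (U : X.left.Opens) (hU : IsAffineOpen U) (h : ∀ p, (fst X T * (snd X T ≫ a)).left p ∈ U)
    (y : 𝟙_ _ ⟶ X) (hy : y ≫ toAff X = 0 ≫ toAff X) : (toUnit T ≫ y) * a = 0 := by
  have := isSeparated_of_ringPts (X := X)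
  have : CompactSpace X.left := QuasiCompact.compactSpace_of_compactSpace X.hom
  have : QuasiSeparatedSpace X.left := quasiSeparatedSpace_of_quasiSeparated X.hom
  have : IsAffine U := hU
  let U' : Over (Spec (.of k)) := Over.mk (U.ι ≫ X.hom)
  have : IsAffine U'.left := hU
  let j : U' ⟶ X := Over.homMk U.ι
  let μ : X ⊗ T ⟶ X := fst X T * (snd X T ≫ a)
  have hr : Set.range μ.left ⊆ Set.range U.ι := by
    rw [Scheme.Opens.range_ι]; rintro _ ⟨p, rfl⟩; exact h p
  let μ' : X ⊗ T ⟶ U' := Over.homMk (IsOpenImmersion.lift U.ι μ.left hr) (by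
    dsimp [U']; rw [IsOpenImmersion.lift_fac_assoc]; exact Over.w μ)
  have hμ : μ' ≫ j = μ := by ext1; exact IsOpenImmersion.lift_fac _ _ _
  obtain ⟨d, hd⟩ := ((GIso.toAff X).tensor (GIso.id (Y := T))).exists_extend μ'
  have key (w : 𝟙_ _ ⟶ X) : (toUnit T ≫ w) * a = lift (toUnit T ≫ w ≫ toAff X) (𝟙 T) ≫ d ≫ j := by
    calc (toUnit T ≫ w) * a = lift (toUnit T ≫ w) (𝟙 T) ≫ μ := by
          rw [RingPts.comp_mul]; simp
      _ = _ := by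
          rw [← hμ, ← hd]; simp
  rw [key, hy, ← key, RingPts.comp_zero, zero_mul]

lemma mul_eq_zero_of_subsingleton [QuasiCompact X.hom] {T : Over (Spec (.of k))} [IsAffine T.left]
    (a : T ⟶ X) (ha : ∀ t, a.left t = zpt X)
    (y : 𝟙_ _ ⟶ X) (hy : y ≫ toAff X = 0 ≫ toAff X) : (toUnit T ≫ y) * a = 0 := by
  obtain ⟨U, hU, hz, -⟩ := exists_isAffineOpen_mem_and_subset (U := ⊤) (x := zpt X) trivial
  refine mul_eq_zero_of_affine a U hU (fun p ↦ ?_) y hy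
  let q := resPtMap (X ⊗ T) p
  have h0 : q ≫ snd X T ≫ a = 0 := by
    apply eq_zero_of_range
    intro t
    rw [resPtMap_apply, Over.comp_left, Scheme.Hom.comp_apply, ha]
  have : q ≫ (fst X T * (snd X T ≫ a)) = 0 := by
    rw [RingPts.comp_mul, h0, mul_zero]
  have t : (resPt (X ⊗ T) p).left := Classical.arbitrary _
  rw [← resPtMap_apply p _ t, this, zero_left_apply]
  exact hz

end

end RingSch

end

section
open AlgebraicGeometry CategoryTheory Limits MonoidalCategory CartesianMonoidalCategory

namespace RingSch

lemma eq_of_forall_quot {X : Scheme.{0}} {R : CommRingCat.{0}} [IsLocalRing R] [IsNoetherianRing R]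
    (g h : Spec R ⟶ X)
    (H : ∀ n : ℕ, Spec.map (CommRingCat.ofHom (Ideal.Quotient.mk (IsLocalRing.maximalIdeal R ^ (n+1)))) ≫ g =
      Spec.map (CommRingCat.ofHom (Ideal.Quotient.mk (IsLocalRing.maximalIdeal R ^ (n+1)))) ≫ h) : g = h := by
  have hpt : ∃ t, (Spec.map (CommRingCat.ofHom (Ideal.Quotient.mk (IsLocalRing.maximalIdeal R ^ (0+1))))) t
      = IsLocalRing.closedPoint R := by
    have := range_comap_of_surjective _ (Ideal.Quotient.mk (IsLocalRing.maximalIdeal R ^ (0+1)))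
      Ideal.Quotient.mk_surjective
    have h2 : IsLocalRing.closedPoint R ∈ Set.range (PrimeSpectrum.comap (Ideal.Quotient.mk (IsLocalRing.maximalIdeal R ^ (0+1)))) := by
      rw [this]
      simp [PrimeSpectrum.mem_zeroLocus, IsLocalRing.closedPoint]
    exact h2
  obtain ⟨t, ht⟩ := hpt
  have hc : g (IsLocalRing.closedPoint R) = h (IsLocalRing.closedPoint R) := by
    rw [← ht]
    exact congr(($(H 0)) t)
  obtain ⟨U, hU, hz, -⟩ := exists_isAffineOpen_mem_and_subset (U := ⊤) (x := g (IsLocalRing.closedPoint R)) trivial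
  have hU' : IsAffine U := hU
  have aux (g : Spec R ⟶ X) (hg : g (IsLocalRing.closedPoint R) ∈ U) :
      ∃ φ : Γ(U, ⊤) ⟶ R, Spec.map φ ≫ U.toScheme.isoSpec.inv ≫ U.ι = g := by
    have : g ⁻¹ᵁ U = ⊤ := (IsLocalRing.closed_point_mem_iff (U := g ⁻¹ᵁ U)).mp hg
    have hr : Set.range g ⊆ Set.range U.ι := by
      rw [Scheme.Opens.range_ι]; rintro _ ⟨p, rfl⟩
      have : p ∈ g ⁻¹ᵁ U := this ▸ trivial
      exact this
    obtain ⟨φ, hφ⟩ := Spec.map_surjective (IsOpenImmersion.lift U.ι g hr ≫ U.toScheme.isoSpec.hom)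
    exact ⟨φ, by rw [hφ]; simp⟩
  obtain ⟨φ, rfl⟩ := aux g hz
  obtain ⟨ψ, rfl⟩ := aux h (hc ▸ hz)
  suffices φ = ψ by rw [this]
  ext a
  rw [← sub_eq_zero]
  have : φ a - ψ a ∈ (⨅ i : ℕ, IsLocalRing.maximalIdeal R ^ i : Ideal R) := by
    rw [Ideal.mem_iInf]
    intro n
    apply Ideal.pow_le_pow_right (Nat.le_succ n)
    have := H n
    rw [← Category.assoc, ← Category.assoc _ (Spec.map ψ), cancel_mono, ← Spec.map_comp, ← Spec.map_comp] at this
    have := congr(($(Spec.map_injective this)) a)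
    exact (Ideal.Quotient.mk_eq_mk_iff_sub_mem _ _).mp this
  rw [Ideal.iInf_pow_eq_bot_of_isLocalRing _ (Ideal.IsPrime.ne_top inferInstance)] at this
  exact this

variable {k : Type} [Field k] {X : Over (Spec (.of k))} [RingPts X]

lemma exists_open_mul_eq_zero [QuasiCompact X.hom] [LocallyOfFiniteType X.hom]
    (y : 𝟙_ _ ⟶ X) (hy : y ≫ toAff X = 0 ≫ toAff X) :
    ∃ V : X.left.Opens, zpt X ∈ V ∧
      V.ι ≫ ((toUnit X ≫ y) * 𝟙 X).left = V.ι ≫ (0 : X ⟶ X).left := by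
  have : IsLocallyNoetherian X.left := LocallyOfFiniteType.isLocallyNoetherian X.hom
  apply spread_out_unique_of_isGermInjective'
  apply eq_of_forall_quot
  intro n
  set R := X.left.presheaf.stalk (zpt X)
  set q := Spec.map (CommRingCat.ofHom (Ideal.Quotient.mk (IsLocalRing.maximalIdeal R ^ (n+1))))
  let T : Over (Spec (.of k)) := Over.mk (q ≫ X.left.fromSpecStalk (zpt X) ≫ X.hom)
  have : IsAffine T.left := inferInstanceAs (IsAffine (Spec _))
  let a : T ⟶ X := Over.homMk (q ≫ X.left.fromSpecStalk (zpt X))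
  have := mul_eq_zero_of_subsingleton a (fun t ↦ ?_) y hy
  · rw [← Category.comp_id a, ← toUnit_unique (a ≫ toUnit X) (toUnit T), Category.assoc, ← RingPts.comp_mul, ← RingPts.comp_zero a] at this
    simpa [a] using congr(($this).left)
  · have : q t = IsLocalRing.closedPoint R := by
      apply PrimeSpectrum.ext
      have hle : IsLocalRing.maximalIdeal R ^ (n+1) ≤ (q t).asIdeal := by
        intro r hr
        change Ideal.Quotient.mk (IsLocalRing.maximalIdeal R ^ (n+1)) r ∈ t.asIdeal
        rw [Ideal.Quotient.eq_zero_iff_mem.mpr hr]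
        exact zero_mem _
      exact ((IsLocalRing.maximalIdeal.isMaximal R).eq_of_le (q t).2.ne_top
        ((q t).2.le_of_pow_le hle)).symm
    change (q ≫ X.left.fromSpecStalk (zpt X)) t = zpt X
    rw [Scheme.Hom.comp_apply]
    exact (congrArg _ this).trans (Scheme.fromSpecStalk_closedPoint)


/-- Rigidity. -/
lemma eq_zero_of_toAff_eq [QuasiCompact X.hom] [LocallyOfFiniteType X.hom] [ConnectedSpace X.left]
    (y : 𝟙_ _ ⟶ X) (hy : y ≫ toAff X = 0 ≫ toAff X) : y = 0 := by
  obtain ⟨V, hV, hVz⟩ := exists_open_mul_eq_zero y hy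
  let m : X ⟶ X := (toUnit X ≫ y) * 𝟙 X
  have hm {T : Over (Spec (.of k))} (t : T ⟶ X) : t ≫ m = (toUnit T ≫ y) * t := by
    rw [RingPts.comp_mul, Category.comp_id, ← Category.assoc, toUnit_unique (t ≫ toUnit X) (toUnit T)]
  let E := pullback m (0 : 𝟙_ _ ⟶ X)
  let ι : E ⟶ X := pullback.fst _ _
  have hι : (toUnit E ≫ y) * ι = 0 := by
    rw [← hm, pullback.condition, RingPts.comp_zero]
  have hlift {T : Over (Spec (.of k))} (t : T ⟶ X) (ht : (toUnit T ≫ y) * t = 0) : ∃ l : T ⟶ E, l ≫ ι = t :=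
    ⟨pullback.lift t (toUnit T) (by rw [hm, ht, RingPts.comp_zero]), pullback.lift_fst _ _ _⟩
  have hcl : IsClosedImmersion ι.left := by
    have := isClosedImmersion_point (0 : 𝟙_ _ ⟶ X)
    exact MorphismProperty.of_isPullback (P := @IsClosedImmersion)
      (isPullback_left (IsPullback.of_hasPullback m (0 : 𝟙_ _ ⟶ X))).flip this
  let σ : X ⊗ E ⟶ X := fst X E + snd X E ≫ ι
  have hσ : IsOpenMap σ.left := by
    let e : X ⊗ E ≅ X ⊗ E :=
      { hom := lift (fst X E + snd X E ≫ ι) (snd X E)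
        inv := lift (fst X E - snd X E ≫ ι) (snd X E)
        hom_inv_id := by ext1 <;> simp [RingPts.comp_sub]
        inv_hom_id := by ext1 <;> simp [RingPts.comp_add] }
    have h1 : σ = e.hom ≫ fst X E := by simp [e, σ]
    have h2 : IsIso e.hom.left := ((Over.forget _).mapIso e).isIso_hom
    have h3 : UniversallyOpen (fst X E).left :=
      inferInstanceAs (UniversallyOpen (pullback.fst X.hom E.hom))
    rw [h1, Over.comp_left]
    exact Scheme.Hom.isOpenMap _
  let W : (X ⊗ E).left.Opens := (fst X E).left ⁻¹ᵁ V
  have hrange : Set.range ι.left = σ.left '' W := by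
    ext x
    constructor
    · rintro ⟨e, rfl⟩
      refine ⟨(lift 0 (𝟙 E)).left e, ?_, ?_⟩
      · change (fst X E).left _ ∈ V
        rw [← Scheme.Hom.comp_apply, ← Over.comp_left, lift_fst, zero_left_apply]
        exact hV
      · rw [← Scheme.Hom.comp_apply, ← Over.comp_left]
        congr 2
        simp [σ, RingPts.comp_add]
    · rintro ⟨p, hp, rfl⟩
      let q := resPtMap (X ⊗ E) p
      have t : (resPt (X ⊗ E) p).left := Classical.arbitrary _
      have h1 : (toUnit _ ≫ y) * (q ≫ fst X E) = 0 := by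
        rw [← hm]
        ext1
        have hr : Set.range (q ≫ fst X E).left ⊆ Set.range V.ι := by
          rw [Scheme.Opens.range_ι]; rintro _ ⟨t, rfl⟩
          rw [resPtMap_apply]
          exact hp
        rw [Over.comp_left, ← IsOpenImmersion.lift_fac V.ι _ hr, Category.assoc, hVz,
          IsOpenImmersion.lift_fac_assoc, ← Over.comp_left, RingPts.comp_zero]
      obtain ⟨l, hl⟩ := hlift (q ≫ σ) (by
        rw [RingPts.comp_add, mul_add, h1, zero_add, ← Category.assoc]
        have := congr((q ≫ snd X E) ≫ $hι)
        rwa [RingPts.comp_mul, RingPts.comp_zero, ← Category.assoc _ (toUnit E),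
          toUnit_unique ((q ≫ snd X E) ≫ toUnit E) (toUnit _)] at this)
      rw [← resPtMap_apply p σ t, ← hl]
      exact ⟨l.left t, by simp⟩
  have hne : (Set.range ι.left).Nonempty := by
    obtain ⟨l, hl⟩ := hlift (0 : 𝟙_ _ ⟶ X) (mul_zero _)
    exact ⟨_, l.left (IsLocalRing.closedPoint k), rfl⟩
  have huniv : Set.range ι.left = Set.univ :=
    IsClopen.eq_univ ⟨ι.left.isClosedEmbedding.isClosed_range, hrange ▸ hσ _ W.2⟩ hne
  have : IsReduced (𝟙_ (Over (Spec (.of k)))).left := inferInstanceAs (IsReduced (Spec (.of k)))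
  obtain ⟨l, hl⟩ := exists_lift_over (1 : 𝟙_ _ ⟶ X) ι (by rw [huniv]; exact Set.subset_univ _)
  have := congr(l ≫ $hι)
  rw [RingPts.comp_mul, RingPts.comp_zero, hl, mul_one, ← Category.assoc, 
    toUnit_unique (l ≫ toUnit E) (𝟙 _), Category.id_comp] at this
  exact this

/-- L3 -/
lemma eq_of_toAff_eq [QuasiCompact X.hom] [LocallyOfFiniteType X.hom] [ConnectedSpace X.left]
    (x y : 𝟙_ _ ⟶ X) (h : x ≫ toAff X = y ≫ toAff X) : x = y := by
  rw [← sub_eq_zero]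
  apply eq_zero_of_toAff_eq
  have := isSeparated_of_ringPts (X := X)
  have : CompactSpace X.left := QuasiCompact.compactSpace_of_compactSpace X.hom
  have : QuasiSeparatedSpace X.left := quasiSeparatedSpace_of_quasiSeparated X.hom
  obtain ⟨d, hd⟩ := ((GIso.toAff X).tensor (GIso.toAff X)).exists_extend
    ((fst X X - snd X X) ≫ toAff X)
  have key (x y : 𝟙_ _ ⟶ X) : (x - y) ≫ toAff X = lift (x ≫ toAff X) (y ≫ toAff X) ≫ d := by
    have : x - y = lift x y ≫ (fst X X - snd X X) := by simp [RingPts.comp_sub]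
    rw [this, Category.assoc, ← hd]
    simp
  rw [key, h, ← key, sub_self]

end RingSch

end

section
open AlgebraicGeometry CategoryTheory Limits MonoidalCategory CartesianMonoidalCategory

namespace RingSch

variable {k : Type} [Field k] {X : Over (Spec (.of k))} [RingPts X]

lemma isQuasiAffine_of_isAlgClosed [IsAlgClosed k] [QuasiCompact X.hom] [LocallyOfFiniteType X.hom]
    [ConnectedSpace X.left] : X.left.IsQuasiAffine := by
  have := isSeparated_of_ringPts (X := X)
  have : CompactSpace X.left := QuasiCompact.compactSpace_of_compactSpace X.hom
  have : QuasiSeparatedSpace X.left := quasiSeparatedSpace_of_quasiSeparated X.hom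
  have := LocallyOfFiniteType.jacobsonSpace X.hom
  have hw : (toAff X).left ≫ (aff X).hom = X.hom := Over.w (toAff X)
  have : LocallyOfFiniteType (toAff X).left := by
    have : LocallyOfFiniteType ((toAff X).left ≫ (aff X).hom) := by rw [hw]; infer_instance
    exact locallyOfFiniteType_of_comp _ (aff X).hom
  have : IsSeparated (toAff X).left := by
    have : IsSeparated ((toAff X).left ≫ (aff X).hom) := by rw [hw]; infer_instance
    exact IsSeparated.of_comp _ (aff X).hom
  have : QuasiCompact (toAff X).left := by
    have : QuasiCompact ((toAff X).left ≫ (aff X).hom) := by rw [hw]; infer_instance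
    exact QuasiCompact.of_comp _ (aff X).hom
  have hred : IsReduced (𝟙_ (Over (Spec (.of k)))).left := inferInstanceAs (IsReduced (Spec (.of k)))
  have hinj : ∀ x ∈ closedPoints X.left, ∀ y ∈ closedPoints X.left,
      (toAff X).left x = (toAff X).left y → x = y := by
    intro x hx y hy hxy
    let px : 𝟙_ _ ⟶ X := Over.homMk (pointOfClosedPoint X.hom x hx) (pointOfClosedPoint_comp ..)
    let py : 𝟙_ _ ⟶ X := Over.homMk (pointOfClosedPoint X.hom y hy) (pointOfClosedPoint_comp ..)
    have hpx (t) : px.left t = x := pointOfClosedPoint_apply ..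
    have hpy (t) : py.left t = y := pointOfClosedPoint_apply ..
    have h : px = py := by
      apply eq_of_toAff_eq
      rw [eq_toUnit_comp_of_range (px ≫ toAff X) (py ≫ toAff X), toUnit_unique (toUnit _) (𝟙 _),
        Category.id_comp]
      rintro _ ⟨t, rfl⟩
      refine ⟨t, ?_⟩
      rw [Over.comp_left, Over.comp_left, Scheme.Hom.comp_apply, Scheme.Hom.comp_apply, hpx, hpy, hxy]
    have t : (𝟙_ (Over (Spec (.of k)))).left := IsLocalRing.closedPoint k
    rw [← hpx t, h, hpy]
  have hcl : ∀ x ∈ closedPoints X.left, (toAff X).left ⁻¹' {(toAff X).left x} = {x} := by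
    intro x hx
    let px : 𝟙_ _ ⟶ X := Over.homMk (pointOfClosedPoint X.hom x hx) (pointOfClosedPoint_comp ..)
    have hpx (t) : px.left t = x := pointOfClosedPoint_apply ..
    have h1 : IsClosed {(toAff X).left x} := by
      have := isClosedImmersion_point (px ≫ toAff X)
      have := (px ≫ toAff X).left.isClosedEmbedding.isClosed_range
      convert this using 1
      ext a
      rw [Over.comp_left]
      constructor
      · rintro rfl
        have t : (𝟙_ (Over (Spec (.of k)))).left := IsLocalRing.closedPoint k
        exact ⟨t, by rw [Scheme.Hom.comp_apply, hpx]⟩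
      · rintro ⟨t, rfl⟩
        rw [Scheme.Hom.comp_apply, hpx]; rfl
    have h2 : IsClosed ((toAff X).left ⁻¹' {(toAff X).left x}) := h1.preimage (toAff X).left.continuous
    rw [← h2.closure_eq, ← JacobsonSpace.closure_inter_closedPoints_eq_closure h2.isLocallyClosed,
      ← IsClosed.closure_eq hx]
    congr 1
    ext y
    constructor
    · rintro ⟨hy1, hy2⟩
      exact hinj _ hy2 _ hx hy1
    · rintro rfl
      exact ⟨rfl, hx⟩
  have : LocallyQuasiFinite (toAff X).left := by
    rw [← Scheme.Hom.quasiFiniteLocus_eq_top_iff, ← TopologicalSpace.Opens.coe_eq_univ,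
      ← not_ne_iff, ← Set.nonempty_compl]
    intro H
    obtain ⟨x, hx, hxc⟩ :=
      nonempty_inter_closedPoints H (toAff X).left.quasiFiniteLocus.2.isClosed_compl.isLocallyClosed
    apply hx
    change (toAff X).left.QuasiFiniteAt x
    rw [Scheme.Hom.quasiFiniteAt_iff_isOpen_singleton_asFiber]
    have : Subsingleton ((toAff X).left.fiber ((toAff X).left x)) := by
      have : Subsingleton ((toAff X).left ⁻¹' {(toAff X).left x}) := by
        rw [hcl x hxc]; infer_instance
      exact ((toAff X).left.fiberHomeo ((toAff X).left x)).injective.subsingleton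
    convert isOpen_univ
    exact Set.eq_univ_of_forall fun y ↦ Subsingleton.elim _ _
  have : IsAffine (toAff X).left.normalization := isAffine_of_isAffineHom (toAff X).left.fromNormalization
  exact Scheme.IsQuasiAffine.of_isImmersion (toAff X).left.toNormalization

end RingSch

end

section
open AlgebraicGeometry CategoryTheory Limits MonoidalCategory CartesianMonoidalCategory

namespace RingSch

variable {k : Type} [Field k] {X : Over (Spec (.of k))}

lemma GIso.isDominant {Y Z : Over (Spec (.of k))} {g : Y ⟶ Z} (hg : GIso g) [IsAffine Z.left]
    [CompactSpace Y.left] : IsDominant g.left := by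
  have : IsIso g.left.appTop := hg
  have h : g.left = Y.left.toSpecΓ ≫ Spec.map g.left.appTop ≫ Z.left.isoSpec.inv := by
    rw [← Scheme.toSpecΓ_naturality_assoc]; simp [Scheme.isoSpec]
  rw [h]
  infer_instance

lemma isAffine_of_isQuasiAffine [RingPts X] [QuasiCompact X.hom] [X.left.IsQuasiAffine] : IsAffine X.left := by
  have := isSeparated_of_ringPts (X := X)
  have : CompactSpace X.left := QuasiCompact.compactSpace_of_compactSpace X.hom
  have : QuasiSeparatedSpace X.left := quasiSeparatedSpace_of_quasiSeparated X.hom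
  let η := toAff X
  have hη := GIso.toAff X
  have hopen : IsOpenImmersion η.left := inferInstanceAs (IsOpenImmersion X.left.toSpecΓ)
  obtain ⟨a, ha⟩ := (hη.tensor hη).exists_extend ((fst X X + snd X X) ≫ η)
  obtain ⟨i, hi⟩ := hη.exists_extend ((-𝟙 X) ≫ η)
  have ha' {T : Over (Spec (.of k))} (x y : T ⟶ X) : lift (x ≫ η) (y ≫ η) ≫ a = (x + y) ≫ η := by
    have : x + y = lift x y ≫ (fst X X + snd X X) := by simp [RingPts.comp_add]
    rw [this, Category.assoc, ← ha]
    simp [η]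
  have hneg {T : Over (Spec (.of k))} (x : T ⟶ X) : x ≫ (-𝟙 X) = - x := by simp [RingPts.comp_neg]
  have hi' {T : Over (Spec (.of k))} (x : T ⟶ X) : x ≫ η ≫ i = (-x) ≫ η := by
    rw [hi, ← Category.assoc, hneg]
  have factA : lift (𝟙 (aff X)) i ≫ a = toUnit (aff X) ≫ 0 ≫ η := by
    apply hη.ext
    have h1 : η ≫ lift (𝟙 (aff X)) i ≫ a = lift (𝟙 X ≫ η) ((-𝟙 X) ≫ η) ≫ a := by
      rw [← hi]; simp [comp_lift_assoc]; rfl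
    change η ≫ _ = η ≫ _
    rw [h1, ha', add_neg_cancel, ← Category.assoc, toUnit_unique (η ≫ toUnit _) (toUnit _), ← Category.assoc,
      RingPts.comp_zero]
  have factB : lift (lift (fst (aff X) X) (snd (aff X) X ≫ η) ≫ a) ((-snd (aff X) X) ≫ η) ≫ a =
      fst (aff X) X := by
    apply (hη.tensor (GIso.id (Y := X))).ext
    have h2 : (η ⊗ₘ 𝟙 X) ≫ (-snd (aff X) X) = - snd X X := by
      rw [RingPts.comp_neg]; simp
    have h1 : (η ⊗ₘ 𝟙 X) ≫ lift (lift (fst (aff X) X) (snd (aff X) X ≫ η) ≫ a) ((-snd (aff X) X) ≫ η) ≫ a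
        = lift (lift (fst X X ≫ η) (snd X X ≫ η) ≫ a) ((- snd X X) ≫ η) ≫ a := by
      rw [comp_lift_assoc, ← Category.assoc _ (- snd _ _), h2, comp_lift_assoc]; simp
    change (η ⊗ₘ 𝟙 X) ≫ _ = (η ⊗ₘ 𝟙 X) ≫ _
    rw [h1, ha', ha']
    simp
  have hsurj : Function.Surjective η.left := by
    intro c
    by_contra hc
    let K := resPt (aff X) c
    let qc : K ⟶ aff X := resPtMap (aff X) c
    let Φ : K ⊗ aff X ⟶ aff X := lift (fst _ _ ≫ qc) (snd _ _) ≫ a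
    have hφ : ∀ p, ((𝟙 K ⊗ₘ η) ≫ Φ).left p ∉ Set.range η.left := by
      intro p hp
      let r := resPtMap (K ⊗ X) p
      have t : (resPt (K ⊗ X) p).left := Classical.arbitrary _
      have hr : Set.range (r ≫ (𝟙 K ⊗ₘ η) ≫ Φ).left ⊆ Set.range η.left := by
        rintro _ ⟨t, rfl⟩
        rw [resPtMap_apply]
        exact hp
      let x' : resPt (K ⊗ X) p ⟶ X := Over.homMk (IsOpenImmersion.lift η.left _ hr) (by
        rw [← Over.w η, IsOpenImmersion.lift_fac_assoc, Over.w])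
      have hx' : x' ≫ η = r ≫ (𝟙 K ⊗ₘ η) ≫ Φ := by
        ext1; exact IsOpenImmersion.lift_fac _ _ _
      have h1 : r ≫ (𝟙 K ⊗ₘ η) ≫ Φ = lift (r ≫ fst K X ≫ qc) (r ≫ snd K X ≫ η) ≫ a := by
        have h0 : r ≫ (𝟙 K ⊗ₘ η) ≫ lift (fst _ _ ≫ qc) (snd _ _) =
            lift (r ≫ fst K X ≫ qc) (r ≫ snd K X ≫ η) := by
          ext1 <;> simp
        rw [← h0]; simp only [Φ, Category.assoc]
      have h2 := congr(lift (r ≫ fst K X ≫ qc) (r ≫ snd K X) ≫ $factB)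
      rw [lift_fst, comp_lift_assoc, comp_lift_assoc, ← Category.assoc _ (- snd _ _), RingPts.comp_neg,
        lift_fst, ← Category.assoc _ (snd _ _), lift_snd, Category.assoc r (snd _ _), ← h1, ← hx', ha'] at h2
      apply hc
      refine ⟨(x' + -r ≫ snd K X).left t, ?_⟩
      have := congr(($h2).left t)
      rw [Over.comp_left, Scheme.Hom.comp_apply] at this
      rw [this, ← Category.assoc, Over.comp_left, Scheme.Hom.comp_apply]
      exact Scheme.fromSpecResidueField_apply _ _
    have hg : GIso (𝟙 K ⊗ₘ η) := GIso.id.tensor hη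
    have : IsAffine (K ⊗ aff X).left := inferInstanceAs (IsAffine (pullback K.hom (aff X).hom))
    have : CompactSpace (K ⊗ X).left := inferInstanceAs (CompactSpace ↥(pullback K.hom X.hom))
    have hdom := hg.isDominant
    have hΦ : ∀ p, Φ.left p ∉ Set.range η.left := by
      have hcl : IsClosed (Φ.left ⁻¹' (Set.range η.left)ᶜ) :=
        hopen.isOpen_range.isClosed_compl.preimage Φ.left.continuous
      have : closure (Set.range (𝟙 K ⊗ₘ η).left) ⊆ _ := hcl.closure_subset_iff.mpr (by
        rintro _ ⟨p, rfl⟩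
        have := hφ p
        rwa [Over.comp_left, Scheme.Hom.comp_apply] at this)
      rw [(𝟙 K ⊗ₘ η).left.denseRange.closure_range] at this
      exact fun p ↦ this trivial
    have t : K.left := Classical.arbitrary (resPt (aff X) c).left
    apply hΦ ((lift (𝟙 K) (qc ≫ i)).left t)
    have h3 : lift (𝟙 K) (qc ≫ i) ≫ Φ = (toUnit K ≫ 0) ≫ η := by
      have := congr(qc ≫ $factA)
      rw [comp_lift_assoc, Category.comp_id, ← Category.assoc, toUnit_unique (qc ≫ toUnit _) (toUnit _)] at this
      rw [Category.assoc, ← this]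
      simp [Φ, comp_lift_assoc]
    have := congr(($h3).left t)
    rw [Over.comp_left, Over.comp_left, Scheme.Hom.comp_apply, Scheme.Hom.comp_apply] at this
    exact ⟨_, this.symm⟩
  have : Surjective η.left := ⟨hsurj⟩
  exact ⟨(isIso_iff_isOpenImmersion_and_surjective η.left).mpr ⟨hopen, this⟩⟩

end RingSch

end

section
open AlgebraicGeometry CategoryTheory Limits MonoidalCategory CartesianMonoidalCategory

namespace RingSch

noncomputable def ringPtsPullback {S S' : Scheme.{0}} (g : S' ⟶ S) (X : Over S) [RingPts X] :
    RingPts ((Over.pullback g).obj X) := by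
  let e (T : Over S') : (T ⟶ (Over.pullback g).obj X) ≃ ((Over.map g).obj T ⟶ X) :=
    ((Over.mapPullbackAdj g).homEquiv T X).symm
  have he {T T' : Over S'} (h : T' ⟶ T) (a : T ⟶ (Over.pullback g).obj X) :
      e T' (h ≫ a) = (Over.map g).map h ≫ e T a :=
    (Over.mapPullbackAdj g).homEquiv_naturality_left_symm h a
  exact
    { ring := fun T ↦ (e T).commRing
      comp_add := fun {T T'} h a b ↦ by
        let := (e T).commRing
        let := (e T').commRing
        apply (e T').injective
        rw [he]
        change _ ≫ (e T) ((e T).symm _) = (e T') ((e T').symm _)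
        rw [Equiv.apply_symm_apply, Equiv.apply_symm_apply]
        simp only [Equiv.toFun_as_coe]
        rw [he, he, RingPts.comp_add]
      comp_mul := fun {T T'} h a b ↦ by
        let := (e T).commRing
        let := (e T').commRing
        apply (e T').injective
        rw [he]
        change _ ≫ (e T) ((e T).symm _) = (e T') ((e T').symm _)
        rw [Equiv.apply_symm_apply, Equiv.apply_symm_apply]
        simp only [Equiv.toFun_as_coe]
        rw [he, he, RingPts.comp_mul]
      comp_one := fun {T T'} h ↦ by
        let := (e T).commRing
        let := (e T').commRing
        apply (e T').injective
        rw [he]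
        change _ ≫ (e T) ((e T).symm _) = (e T') ((e T').symm _)
        rw [Equiv.apply_symm_apply, Equiv.apply_symm_apply, RingPts.comp_one] }

variable {k : Type} [Field k] {X : Over (Spec (.of k))}

lemma connectedSpace_pullback [RingPts X] [ConnectedSpace X.left] (K : Type) [Field K] [Algebra k K]
    [Algebra.IsAlgebraic k K] :
    ConnectedSpace ↥(pullback X.hom (Spec.map (CommRingCat.ofHom (algebraMap k K)))) := by
  let g := Spec.map (CommRingCat.ofHom (algebraMap k K))
  have : IsIntegralHom g := by
    dsimp only [g]
    rw [IsIntegralHom.SpecMap_iff]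
    exact algebraMap_isIntegral_iff.mpr inferInstance
  let s : Spec (.of k) ⟶ X.left := (0 : 𝟙_ _ ⟶ X).left
  have hs : s ≫ X.hom = 𝟙 _ := Over.w (0 : 𝟙_ _ ⟶ X)
  let sK : Spec (.of K) ⟶ pullback X.hom g := pullback.lift (g ≫ s) (𝟙 _) (by simp [hs])
  have hpb : IsPullback sK g (pullback.fst X.hom g) s := by
    have h1 : IsPullback (sK ≫ pullback.snd X.hom g) g g (s ≫ X.hom) := by
      rw [hs]; simp only [sK, pullback.lift_snd]
      exact IsPullback.of_horiz_isIso ⟨by simp⟩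
    exact IsPullback.of_right h1 (pullback.lift_fst _ _ _) (IsPullback.of_hasPullback X.hom g).flip
  have hr : Set.range sK = pullback.fst X.hom g ⁻¹' {zpt X} := by
    have : Set.range s = {zpt X} := range_zero_left
    rw [← this, ← Scheme.Pullback.range_fst, ← hpb.isoPullback_hom_fst, Scheme.Hom.comp_base]
    simp [Set.range_comp]
  have hop : IsOpenMap (pullback.fst X.hom g) := Scheme.Hom.isOpenMap _
  have hcl : IsClosedMap (pullback.fst X.hom g) := Scheme.Hom.isClosedMap _
  have key (A : Set ↥(pullback X.hom g)) (hA : IsClopen A) (hne : A.Nonempty) :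
      sK (IsLocalRing.closedPoint K) ∈ A := by
    have : (pullback.fst X.hom g) '' A = Set.univ :=
      IsClopen.eq_univ ⟨hcl _ hA.1, hop _ hA.2⟩ (hne.image _)
    obtain ⟨p, hp, hpz⟩ : zpt X ∈ (pullback.fst X.hom g) '' A := this ▸ trivial
    have : p ∈ Set.range sK := by rw [hr]; exact hpz
    obtain ⟨t, rfl⟩ := this
    rwa [Subsingleton.elim (IsLocalRing.closedPoint K) t]
  have hpre : PreconnectedSpace ↥(pullback X.hom g) := by
    rw [preconnectedSpace_iff_clopen]
    intro A hA
    by_contra! h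
    have h1 := key A hA h.1
    have h2 := key Aᶜ hA.compl (Set.nonempty_compl.mpr h.2)
    exact h2 h1
  exact { toPreconnectedSpace := hpre, toNonempty := ⟨sK (IsLocalRing.closedPoint K)⟩ }

lemma isAffine_of_ringPts [RingPts X] [QuasiCompact X.hom] [LocallyOfFiniteType X.hom] 
    [ConnectedSpace X.left] : IsAffine X.left := by
  have := isSeparated_of_ringPts (X := X)
  have : CompactSpace X.left := QuasiCompact.compactSpace_of_compactSpace X.hom
  have : QuasiSeparatedSpace X.left := quasiSeparatedSpace_of_quasiSeparated X.hom
  let K := AlgebraicClosure k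
  let g := Spec.map (CommRingCat.ofHom (algebraMap k K))
  have haff : IsAffine (pullback X.hom g) := by
    let Y := (Over.pullback g).obj X
    have : ConnectedSpace Y.left := connectedSpace_pullback (X := X) K
    letI : RingPts Y := ringPtsPullback g X
    have : QuasiCompact Y.hom := inferInstanceAs (QuasiCompact (pullback.snd X.hom g))
    have : LocallyOfFiniteType Y.hom := inferInstanceAs (LocallyOfFiniteType (pullback.snd X.hom g))
    have : Y.left.IsQuasiAffine := isQuasiAffine_of_isAlgClosed
    exact isAffine_of_isQuasiAffine (X := Y)
  let T : Over (Spec (.of k)) := Over.mk g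
  have : IsAffine T.left := inferInstanceAs (IsAffine (Spec _))
  have : IsAffineHom T.hom := isAffineHom_of_isAffine T
  have : IsAffineHom (aff X).hom := isAffineHom_of_isAffine (aff X)
  have hG : GIso (toAff X ⊗ₘ 𝟙 T) := (GIso.toAff X).tensor GIso.id
  have : IsAffine (X ⊗ T).left := haff
  have : IsAffine (aff X ⊗ T).left := inferInstanceAs (IsAffine (pullback (aff X).hom T.hom))
  have hiso : IsIso (toAff X ⊗ₘ 𝟙 T).left := by
    have : IsIso (toAff X ⊗ₘ 𝟙 T).left.appTop := hG
    have h := Scheme.toSpecΓ_naturality (toAff X ⊗ₘ 𝟙 T).left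
    have h' : IsIso ((toAff X ⊗ₘ 𝟙 T).left ≫ (aff X ⊗ T).left.toSpecΓ) := by
      rw [h]; infer_instance
    exact IsIso.of_isIso_comp_right _ (aff X ⊗ T).left.toSpecΓ
  have hpb : IsPullback (toAff X ⊗ₘ 𝟙 T) (fst X T) (fst (aff X) T) (toAff X) := by
    refine ⟨⟨by simp⟩, ⟨PullbackCone.IsLimit.mk _ (fun s ↦ lift s.snd (s.fst ≫ snd _ _)) ?_ ?_ ?_⟩⟩
    · intro s
      have := s.condition
      ext1 <;> simp [this]
    · intro s; simp
    · intro s m h1 h2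
      ext1
      · simpa using h2
      · rw [← h1]; simp
  have hpb' := isPullback_left hpb
  have : IsIso (toAff X).left := by
    refine MorphismProperty.of_isPullback_of_descendsAlong (P := MorphismProperty.isomorphisms Scheme)
      (Q := @Surjective ⊓ @Flat ⊓ @QuasiCompact) hpb' ?_ hiso
    change (@Surjective ⊓ @Flat ⊓ @QuasiCompact : MorphismProperty Scheme) (pullback.fst (aff X).hom g)
    exact ⟨⟨inferInstance, inferInstance⟩, inferInstance⟩
  exact ⟨this⟩

noncomputable def ringPtsOf (X : Scheme.{0}) (f : X ⟶ Spec (CommRingCat.of k))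
    (ringStr : ∀ (T : Scheme) (fT : T ⟶ Spec (CommRingCat.of k)),
      CommRing {g : T ⟶ X // g ≫ f = fT})
    (hnat : ∀ (T T' : Scheme) (fT : T ⟶ Spec (CommRingCat.of k))
      (fT' : T' ⟶ Spec (CommRingCat.of k)) (h : T' ⟶ T), h ≫ fT = fT' →
      letI := ringStr T fT
      letI := ringStr T' fT'
      ∃ φ : {g : T ⟶ X // g ≫ f = fT} →+* {g : T' ⟶ X // g ≫ f = fT'},
        ∀ g : {g : T ⟶ X // g ≫ f = fT}, (φ g : T' ⟶ X) = h ≫ (g : T ⟶ X)) :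
    RingPts (Over.mk f) := by
  let e (T : Over (Spec (CommRingCat.of k))) : (T ⟶ Over.mk f) ≃ {g : T.left ⟶ X // g ≫ f = T.hom} :=
    { toFun := fun a ↦ ⟨a.left, Over.w a⟩
      invFun := fun b ↦ Over.homMk b.1 b.2
      left_inv := fun a ↦ by ext; rfl
      right_inv := fun b ↦ by ext; rfl }
  letI r (T : Over (Spec (CommRingCat.of k))) : CommRing {g : T.left ⟶ X // g ≫ f = T.hom} :=
    ringStr T.left T.hom
  have he {T T' : Over (Spec (CommRingCat.of k))} (h : T' ⟶ T) :
      ∃ φ : {g : T.left ⟶ X // g ≫ f = T.hom} →+* {g : T'.left ⟶ X // g ≫ f = T'.hom},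
        ∀ a, e T' (h ≫ a) = φ (e T a) := by
    obtain ⟨φ, hφ⟩ := hnat T.left T'.left T.hom T'.hom h.left (Over.w h)
    exact ⟨φ, fun a ↦ Subtype.ext (hφ (e T a)).symm⟩
  exact
    { ring := fun T ↦ (e T).commRing
      comp_add := fun {T T'} h a b ↦ by
        let := (e T).commRing
        let := (e T').commRing
        obtain ⟨φ, hφ⟩ := he h
        apply (e T').injective
        rw [hφ]
        change φ ((e T) ((e T).symm _)) = (e T') ((e T').symm _)
        rw [Equiv.apply_symm_apply, Equiv.apply_symm_apply]
        simp only [Equiv.toFun_as_coe]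
        rw [hφ, hφ, map_add]
      comp_mul := fun {T T'} h a b ↦ by
        let := (e T).commRing
        let := (e T').commRing
        obtain ⟨φ, hφ⟩ := he h
        apply (e T').injective
        rw [hφ]
        change φ ((e T) ((e T).symm _)) = (e T') ((e T').symm _)
        rw [Equiv.apply_symm_apply, Equiv.apply_symm_apply]
        simp only [Equiv.toFun_as_coe]
        rw [hφ, hφ, map_mul]
      comp_one := fun {T T'} h ↦ by
        let := (e T).commRing
        let := (e T').commRing
        obtain ⟨φ, hφ⟩ := he h
        apply (e T').injective
        rw [hφ]
        change φ ((e T) ((e T).symm _)) = (e T') ((e T').symm _)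
        rw [Equiv.apply_symm_apply, Equiv.apply_symm_apply, map_one] }

end RingSch

end

open AlgebraicGeometry CategoryTheory

/-- **Theorem 2.4**: let `k` be a field and `X` a ring scheme over `k` whose underlying scheme
is of finite type over `k` (locally of finite type and quasi-compact) and whose underlying
topological space is connected.  Then `X` is affine.

A ring scheme structure over `k` is encoded, via the functor of points, as a commutative
unital ring structure on the set `X(T) = Hom_{Spec k}(T, X)` of `T`-points for every
`k`-scheme `T`, functorial in `T` (precomposition with any morphism of `k`-schemes is a ring
homomorphism); this is equivalent to giving addition, multiplication, negation, zero and one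
morphisms over `Spec k` satisfying the commutative ring axioms as equalities of morphisms of
schemes over `Spec k`. -/
theorem connected_finiteType_ring_scheme_is_affine
    (k : Type) [Field k]
    (X : Scheme) (f : X ⟶ Spec (CommRingCat.of k))
    [LocallyOfFiniteType f] [QuasiCompact f]
    (hconn : ConnectedSpace X)
    -- a commutative ring structure on the `T`-points of `X` for every `k`-scheme `T`
    (ringStr : ∀ (T : Scheme) (fT : T ⟶ Spec (CommRingCat.of k)),
      CommRing {g : T ⟶ X // g ≫ f = fT})
    -- functoriality: precomposition with a morphism of `k`-schemes is a ring homomorphism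
    (hnat : ∀ (T T' : Scheme) (fT : T ⟶ Spec (CommRingCat.of k))
      (fT' : T' ⟶ Spec (CommRingCat.of k)) (h : T' ⟶ T), h ≫ fT = fT' →
      letI := ringStr T fT
      letI := ringStr T' fT'
      ∃ φ : {g : T ⟶ X // g ≫ f = fT} →+* {g : T' ⟶ X // g ≫ f = fT'},
        ∀ g : {g : T ⟶ X // g ≫ f = fT}, (φ g : T' ⟶ X) = h ≫ (g : T ⟶ X)) :
    IsAffine X := by
  let : RingSch.RingPts (Over.mk f) := RingSch.ringPtsOf X f ringStr hnat
  have : QuasiCompact (Over.mk f).hom := inferInstanceAs (QuasiCompact f)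
  have : LocallyOfFiniteType (Over.mk f).hom := inferInstanceAs (LocallyOfFiniteType f)
  have : ConnectedSpace (Over.mk f).left := hconn
  exact RingSch.isAffine_of_ringPts (X := Over.mk f)
end

section
/- Let k be a field and A a k-biring that is finitely generated as a k-algebra and whose only idempotent elements are 0 and 1 (so that Spec A is a connected affine ring scheme of finite type over k). Then the additive group scheme of Spec A is unipotent: for every Hopf ideal I of A with I ≠ ker ε⁺, there exists x ∈ A with x ∉ I and Δ⁺(x) − x ⊗ 1 − 1 ⊗ x ∈ I ⊗ A + A ⊗ I. (Theorem 2.6 of the paper: over a field, all connected ring schemes of finite type are unipotent.) -/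
/- A `k`-biring: a commutative `k`-algebra `A` with coaddition, additive counit, antipode,
comultiplication and multiplicative counit, such that for every commutative `k`-algebra `R`
the induced operations make `Hom_{k-alg}(A, R)` a commutative unital ring (equivalently, the
diagrammatic coring/codistributivity axioms hold). -/

open scoped TensorProduct

/-- The binary operation on `k`-algebra homomorphisms `A →ₐ[k] R` induced by a
comultiplication-type map `Δ : A →ₐ[k] A ⊗[k] A`: `(f, g) ↦ mult ∘ (f ⊗ g) ∘ Δ`. -/
noncomputable def ptOp (k A : Type) [Field k] [CommRing A] [Algebra k A]
    (Δ : A →ₐ[k] A ⊗[k] A) {R : Type} [CommRing R] [Algebra k R]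
    (f g : A →ₐ[k] R) : A →ₐ[k] R :=
  (Algebra.TensorProduct.lmul' k (S := R)).comp ((Algebra.TensorProduct.map f g).comp Δ)

/-- The constant point induced by a counit-type map `ε : A →ₐ[k] k`. -/
noncomputable def ptConst (k A : Type) [Field k] [CommRing A] [Algebra k A]
    (ε : A →ₐ[k] k) {R : Type} [CommRing R] [Algebra k R] : A →ₐ[k] R :=
  (Algebra.ofId k R).comp ε

/-- A `k`-biring structure on the commutative `k`-algebra `A`; equivalently, the structure of
an affine ring scheme on `Spec A` over `k`. -/
structure Biring (k A : Type) [Field k] [CommRing A] [Algebra k A] where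
  coadd : A →ₐ[k] A ⊗[k] A
  counitAdd : A →ₐ[k] k
  antipode : A →ₐ[k] A
  comul : A →ₐ[k] A ⊗[k] A
  counitMul : A →ₐ[k] k
  pt_add_assoc : ∀ (R : Type) [CommRing R] [Algebra k R] (f g h : A →ₐ[k] R),
    ptOp k A coadd (ptOp k A coadd f g) h = ptOp k A coadd f (ptOp k A coadd g h)
  pt_add_comm : ∀ (R : Type) [CommRing R] [Algebra k R] (f g : A →ₐ[k] R),
    ptOp k A coadd f g = ptOp k A coadd g f
  pt_zero_add : ∀ (R : Type) [CommRing R] [Algebra k R] (f : A →ₐ[k] R),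
    ptOp k A coadd (ptConst k A counitAdd) f = f
  pt_add_neg : ∀ (R : Type) [CommRing R] [Algebra k R] (f : A →ₐ[k] R),
    ptOp k A coadd f (f.comp antipode) = ptConst k A counitAdd
  pt_mul_assoc : ∀ (R : Type) [CommRing R] [Algebra k R] (f g h : A →ₐ[k] R),
    ptOp k A comul (ptOp k A comul f g) h = ptOp k A comul f (ptOp k A comul g h)
  pt_mul_comm : ∀ (R : Type) [CommRing R] [Algebra k R] (f g : A →ₐ[k] R),
    ptOp k A comul f g = ptOp k A comul g f
  pt_one_mul : ∀ (R : Type) [CommRing R] [Algebra k R] (f : A →ₐ[k] R),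
    ptOp k A comul (ptConst k A counitMul) f = f
  pt_mul_add : ∀ (R : Type) [CommRing R] [Algebra k R] (f g h : A →ₐ[k] R),
    ptOp k A comul f (ptOp k A coadd g h)
      = ptOp k A coadd (ptOp k A comul f g) (ptOp k A comul f h)

/-- The `k`-submodule `I ⊗ A + A ⊗ I` of `A ⊗[k] A` spanned by the elements `i ⊗ a` and
`a ⊗ i` with `i ∈ I`, `a ∈ A`. -/
def sideIdeal (k A : Type) [Field k] [CommRing A] [Algebra k A] (I : Ideal A) :
    Submodule k (A ⊗[k] A) :=
  Submodule.span k {x : A ⊗[k] A | ∃ i ∈ I, ∃ a : A, x = i ⊗ₜ[k] a ∨ x = a ⊗ₜ[k] i}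


namespace BR
variable {k A : Type} [Field k] [CommRing A] [Algebra k A]

/-- right slice -/
noncomputable def sl (φ : A →ₗ[k] k) : A ⊗[k] A →ₗ[k] A :=
  TensorProduct.lift (LinearMap.mk₂ k (fun a b => φ b • a)
    (by intros; simp) (by intros; exact smul_comm _ _ _) (by intros; simp [add_smul])
    (by intros; simp [mul_smul]))

@[simp] lemma sl_tmul (φ : A →ₗ[k] k) (a b : A) : sl φ (a ⊗ₜ[k] b) = φ b • a := rfl

/-- left slice -/
noncomputable def sr {W : Type} [AddCommGroup W] [Module k W] (φ : A →ₗ[k] k) :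
    A ⊗[k] W →ₗ[k] W :=
  TensorProduct.lift (LinearMap.mk₂ k (fun a b => φ a • b)
    (by intros; simp [add_smul]) (by intros; simp [mul_smul]) (by intros; simp)
    (by intros; exact smul_comm _ _ _))

@[simp] lemma sr_tmul {W : Type} [AddCommGroup W] [Module k W] (φ : A →ₗ[k] k) (a : A) (b : W) :
    sr φ (a ⊗ₜ[k] b) = φ a • b := rfl

lemma sl_sep (z : A ⊗[k] A) (h : ∀ φ : A →ₗ[k] k, sl φ z = 0) : z = 0 := by
  classical
  let b := Module.Basis.ofVectorSpace k A
  apply (TensorProduct.equivFinsuppOfBasisRight (M := A) b).injective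
  rw [map_zero]
  ext i
  have : (TensorProduct.equivFinsuppOfBasisRight (M := A) b z) i = sl (b.coord i) z := by
    induction z with
    | zero => simp
    | add x y hx hy => 
      have hx' : (TensorProduct.equivFinsuppOfBasisRight (M := A) b x) i = sl (b.coord i) x := by
        clear h hx hy
        induction x with
        | zero => simp
        | add x y hx hy => simp [hx, hy]
        | tmul x y => simp
      have hy' : (TensorProduct.equivFinsuppOfBasisRight (M := A) b y) i = sl (b.coord i) y := by
        clear h hx hy
        induction y with
        | zero => simp
        | add x y hx hy => simp [hx, hy]
        | tmul x y => simp
      simp [hx', hy']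
    | tmul x y => simp
  rw [this, h]; simp

/-- If all slices lie in V then z is fixed by a projection to V. -/
lemma proj_fix (V : Submodule k A) (π : A →ₗ[k] A) (hπ : ∀ v ∈ V, π v = v)
    (z : A ⊗[k] A) (h : ∀ φ, sl φ z ∈ V) : π.rTensor A z = z := by
  rw [← sub_eq_zero]
  apply sl_sep
  intro φ
  have : ∀ w : A ⊗[k] A, sl φ (π.rTensor A w) = π (sl φ w) := by
    intro w
    induction w with
    | zero => simp
    | add x y hx hy => simp only [map_add, hx, hy]
    | tmul x y => simp
  rw [map_sub, this, hπ _ (h φ), sub_self]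

lemma exists_proj (V : Submodule k A) : ∃ π : A →ₗ[k] V, ∀ v : V, π v = v := by
  obtain ⟨p, hp⟩ := LinearMap.exists_leftInverse_of_injective V.subtype (by simp)
  exact ⟨p, fun v => by simpa using LinearMap.congr_fun hp v⟩

lemma mem_sideIdeal (I : Ideal A) (z : A ⊗[k] A) (h : ∀ φ : A →ₗ[k] k, sl φ z ∈ I) :
    z ∈ sideIdeal k A I := by
  let V : Submodule k A := I.restrictScalars k
  obtain ⟨π, hπ⟩ := exists_proj V
  have h1 := proj_fix V (V.subtype ∘ₗ π) (fun v hv => by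
    simpa using congrArg Subtype.val (hπ ⟨v, hv⟩)) z h
  rw [← h1]
  clear h1 h
  induction z with
  | zero => simp
  | add x y hx hy => rw [map_add]; exact add_mem hx hy
  | tmul x y =>
    apply Submodule.subset_span
    exact ⟨π x, (π x).2, y, Or.inl (by simp)⟩

/-- finite-dimensionality of slices -/
lemma exists_fd (z : A ⊗[k] A) : ∃ W : Submodule k A, Module.Finite k W ∧ ∀ φ, sl φ z ∈ W := by
  induction z with
  | zero => exact ⟨⊥, inferInstance, by simp⟩
  | add x y hx hy =>
    obtain ⟨W, h1, h2⟩ := hx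
    obtain ⟨W', h1', h2'⟩ := hy
    refine ⟨W ⊔ W', inferInstance, fun φ => ?_⟩
    rw [map_add]
    exact add_mem (Submodule.mem_sup_left (h2 φ)) (Submodule.mem_sup_right (h2' φ))
  | tmul x y =>
    refine ⟨k ∙ x, inferInstance, fun φ => ?_⟩
    exact Submodule.smul_mem _ _ (Submodule.mem_span_singleton_self x)

open Algebra.TensorProduct in
lemma ptOp_apply_incl (Δ : A →ₐ[k] A ⊗[k] A) {R : Type} [CommRing R] [Algebra k R]
    (f g : A →ₐ[k] R) : ptOp k A Δ f g = (lift f g (fun _ _ => Commute.all _ _)).comp Δ := by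
  rw [ptOp, ← AlgHom.comp_assoc]
  congr 1
  ext <;> simp

variable (B : Biring k A)

/-- slice action by coaddition -/
noncomputable def T (φ : A →ₗ[k] k) : A →ₗ[k] A := sl φ ∘ₗ B.coadd.toLinearMap
/-- slice action by comultiplication -/
noncomputable def M (φ : A →ₗ[k] k) : A →ₗ[k] A := sl φ ∘ₗ B.comul.toLinearMap
/-- convolution -/
noncomputable def cv (φ ψ : A →ₗ[k] k) : A →ₗ[k] k := φ ∘ₗ sl ψ ∘ₗ B.coadd.toLinearMap
/-- additive counit -/
noncomputable def e0 : A →ₗ[k] k := B.counitAdd.toLinearMap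

open Algebra.TensorProduct

lemma coassoc (a : A) : (TensorProduct.assoc k A A A) ((B.coadd.toLinearMap.rTensor A) (B.coadd a)) =
    (B.coadd.toLinearMap.lTensor A) (B.coadd a) := by
  have h := B.pt_add_assoc (A ⊗[k] (A ⊗[k] A)) includeLeft (includeRight.comp includeLeft)
    (includeRight.comp includeRight)
  have h' := DFunLike.congr_fun h a
  simp only [ptOp_apply_incl, AlgHom.comp_apply] at h'
  have e1 : ∀ z : A ⊗[k] A, (lift ((lift (includeLeft : A →ₐ[k] (A ⊗[k] (A ⊗[k] A))) (includeRight.comp includeLeft) (fun _ _ => Commute.all _ _)).comp B.coadd) (includeRight.comp includeRight) (fun _ _ => Commute.all _ _)) z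
     = (TensorProduct.assoc k A A A) ((B.coadd.toLinearMap.rTensor A) z) := by
    intro z
    induction z with
    | zero => simp
    | add x y hx hy => simp only [map_add, hx, hy]
    | tmul x y =>
      simp only [lift_tmul, AlgHom.comp_apply, LinearMap.rTensor_tmul, AlgHom.toLinearMap_apply]
      generalize B.coadd x = w
      induction w with
      | zero => simp
      | add x y hx hy => simp only [map_add, add_mul, TensorProduct.add_tmul, hx, hy]
      | tmul x y => simp
  have e2 : ∀ z : A ⊗[k] A, (lift (includeLeft : A →ₐ[k] (A ⊗[k] (A ⊗[k] A))) ((lift ((includeRight : (A ⊗[k] A) →ₐ[k] (A ⊗[k] (A ⊗[k] A))).comp includeLeft) (includeRight.comp includeRight) (fun _ _ => Commute.all _ _)).comp B.coadd)  (fun _ _ => Commute.all _ _)) z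
     = (B.coadd.toLinearMap.lTensor A) z := by
    intro z
    induction z with
    | zero => simp
    | add x y hx hy => simp only [map_add, hx, hy]
    | tmul x y =>
      simp only [lift_tmul, AlgHom.comp_apply, LinearMap.lTensor_tmul, AlgHom.toLinearMap_apply]
      generalize B.coadd y = w
      induction w with
      | zero => simp
      | add x y hx hy => simp only [map_add, mul_add, TensorProduct.tmul_add, hx, hy]
      | tmul x y => simp
  rw [e1, e2] at h'
  exact h'

lemma cocomm (a : A) : TensorProduct.comm k A A (B.coadd a) = B.coadd a := by
  have h := B.pt_add_comm (A ⊗[k] A) includeLeft includeRight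
  have h' := DFunLike.congr_fun h a
  simp only [ptOp_apply_incl, AlgHom.comp_apply] at h'
  generalize B.coadd a = z at h' 
  have e1 : ∀ z : A ⊗[k] A, (lift (includeLeft : A →ₐ[k] (A ⊗[k] A)) includeRight (fun _ _ => Commute.all _ _)) z = z := by
    intro z
    induction z with
    | zero => simp
    | add x y hx hy => simp only [map_add, hx, hy]
    | tmul x y => simp
  have e2 : ∀ z : A ⊗[k] A, (lift (includeRight : A →ₐ[k] (A ⊗[k] A)) includeLeft (fun _ _ => Commute.all _ _)) z = TensorProduct.comm k A A z := by
    intro z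
    induction z with
    | zero => simp
    | add x y hx hy => simp only [map_add, hx, hy]
    | tmul x y => simp
  rw [e1, e2] at h'
  exact h'.symm

lemma lift_const_left (ε : A →ₐ[k] k) (z : A ⊗[k] A) :
    (lift (ptConst k A ε (R := A)) (AlgHom.id k A) (fun _ _ => Commute.all _ _)) z
      = sr ε.toLinearMap z := by
  induction z with
  | zero => simp
  | add x y hx hy => simp only [map_add, hx, hy]
  | tmul x y => simp [ptConst, Algebra.smul_def, Algebra.ofId_apply]

lemma counit_left (a : A) : sr (e0 B) (B.coadd a) = a := by
  have h' := DFunLike.congr_fun (B.pt_zero_add A (AlgHom.id k A)) a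
  simp only [ptOp_apply_incl, AlgHom.comp_apply, lift_const_left] at h'
  exact h'

lemma mulcounit_left (a : A) : sr B.counitMul.toLinearMap (B.comul a) = a := by
  have h' := DFunLike.congr_fun (B.pt_one_mul A (AlgHom.id k A)) a
  simp only [ptOp_apply_incl, AlgHom.comp_apply, lift_const_left] at h'
  exact h'

lemma pt_mul_zero (R : Type) [CommRing R] [Algebra k R] (f : A →ₐ[k] R) :
    ptOp k A B.comul f (ptConst k A B.counitAdd) = ptConst k A B.counitAdd := by
  set z : A →ₐ[k] R := ptConst k A B.counitAdd with hz
  set w := ptOp k A B.comul f z with hw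
  have h1 : ptOp k A B.coadd w w = w := by
    have := B.pt_mul_add R f z z
    rw [B.pt_zero_add] at this
    exact this.symm
  have h2 := B.pt_add_assoc R w w (w.comp B.antipode)
  rw [h1, B.pt_add_neg, ← hz, B.pt_add_comm R w z, B.pt_zero_add] at h2
  exact h2.symm

lemma zero_left (a : A) : sr (e0 B) (B.comul a) = algebraMap k A (B.counitAdd a) := by
  have h := pt_mul_zero B A (AlgHom.id k A)
  rw [B.pt_mul_comm] at h
  have h' := DFunLike.congr_fun h a
  simp only [ptOp_apply_incl, AlgHom.comp_apply, lift_const_left] at h'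
  exact h'

lemma sl_eq_sr_comm (φ : A →ₗ[k] k) (z : A ⊗[k] A) : sl φ z = sr φ (TensorProduct.comm k A A z) := by
  induction z with
  | zero => simp
  | add x y hx hy => simp only [map_add, hx, hy]
  | tmul x y => simp

lemma mulcocomm (a : A) : TensorProduct.comm k A A (B.comul a) = B.comul a := by
  have h := B.pt_mul_comm (A ⊗[k] A) includeLeft includeRight
  have h' := DFunLike.congr_fun h a
  simp only [ptOp_apply_incl, AlgHom.comp_apply] at h'
  generalize B.comul a = z at h' 
  have e1 : ∀ z : A ⊗[k] A, (lift (includeLeft : A →ₐ[k] (A ⊗[k] A)) includeRight (fun _ _ => Commute.all _ _)) z = z := by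
    intro z
    induction z with
    | zero => simp
    | add x y hx hy => simp only [map_add, hx, hy]
    | tmul x y => simp
  have e2 : ∀ z : A ⊗[k] A, (lift (includeRight : A →ₐ[k] (A ⊗[k] A)) includeLeft (fun _ _ => Commute.all _ _)) z = TensorProduct.comm k A A z := by
    intro z
    induction z with
    | zero => simp
    | add x y hx hy => simp only [map_add, hx, hy]
    | tmul x y => simp
  rw [e1, e2] at h'
  exact h'.symm

/-- double slice -/
lemma slice_swap (φ ψ : A →ₗ[k] k) (z : A ⊗[k] A) : φ (sl ψ z) = ψ (sr φ z) := by
  induction z with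
  | zero => simp
  | add x y hx hy => simp only [map_add, hx, hy]
  | tmul x y => simp [mul_comm]

lemma cv_comm (φ ψ : A →ₗ[k] k) : cv B φ ψ = cv B ψ φ := by
  ext a
  simp only [cv, LinearMap.comp_apply, AlgHom.toLinearMap_apply]
  rw [slice_swap, sl_eq_sr_comm, cocomm]

lemma T_counit (a : A) : T B (e0 B) a = a := by
  simp only [T, LinearMap.comp_apply, AlgHom.toLinearMap_apply]
  rw [sl_eq_sr_comm, cocomm, counit_left]

lemma counit_T (φ : A →ₗ[k] k) (a : A) : e0 B (T B φ a) = φ a := by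
  simp only [T, LinearMap.comp_apply, AlgHom.toLinearMap_apply]
  rw [slice_swap, counit_left]

lemma T_one (φ : A →ₗ[k] k) : T B φ 1 = φ 1 • 1 := by
  simp [T, Algebra.TensorProduct.one_def]

lemma T_comp (φ ψ : A →ₗ[k] k) (a : A) : T B φ (T B ψ a) = T B (cv B φ ψ) a := by
  have h := coassoc B a
  have h2 := congrArg (TensorProduct.lift (LinearMap.mk₂ k (fun (x : A) (w : A ⊗[k] A) => φ (sl ψ w) • x)
    (by intros; simp) (by intros; exact smul_comm _ _ _) (by intros; simp [add_smul])
    (by intros; simp [mul_smul]))) h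
  simp only [T, cv, LinearMap.comp_apply, AlgHom.toLinearMap_apply]
  convert h2 using 1
  · generalize B.coadd a = z
    induction z with
    | zero => simp
    | add x y hx hy => simp only [map_add, hx, hy]
    | tmul x y =>
      simp only [sl_tmul, LinearMap.rTensor_tmul, AlgHom.toLinearMap_apply, map_smul]
      generalize B.coadd x = w
      induction w with
      | zero => simp
      | add x y hx hy => simp only [map_add, smul_add, TensorProduct.add_tmul, hx, hy]
      | tmul x y => simp [mul_smul]
  · generalize B.coadd a = z
    induction z with
    | zero => simp
    | add x y hx hy => simp only [map_add, hx, hy]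
    | tmul x y => simp

lemma T_comm (φ ψ : A →ₗ[k] k) (a : A) : T B φ (T B ψ a) = T B ψ (T B φ a) := by
  rw [T_comp, cv_comm, T_comp]

lemma counitMul_M (φ : A →ₗ[k] k) (a : A) : B.counitMul (M B φ a) = φ a := by
  change B.counitMul.toLinearMap (sl φ (B.comul a)) = _
  rw [slice_swap, mulcounit_left]

lemma counitAdd_M (φ : A →ₗ[k] k) (a : A) : B.counitAdd (M B φ a) = B.counitAdd a * φ 1 := by
  change e0 B (sl φ (B.comul a)) = _
  rw [slice_swap, zero_left, Algebra.algebraMap_eq_smul_one, map_smul, smul_eq_mul]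

lemma M_counit (a : A) : M B (e0 B) a = algebraMap k A (B.counitAdd a) := by
  change sl (e0 B) (B.comul a) = _
  rw [sl_eq_sr_comm, mulcocomm, zero_left]

lemma M_cv (φ ψ : A →ₗ[k] k) (a : A) : M B (cv B φ ψ) a =
    LinearMap.mul' k A (TensorProduct.map (M B φ) (M B ψ) (B.coadd a)) := by
  have h := B.pt_mul_add (A ⊗[k] (A ⊗[k] A)) includeLeft (includeRight.comp includeLeft)
    (includeRight.comp includeRight)
  have h' := DFunLike.congr_fun h a
  simp only [ptOp_apply_incl, AlgHom.comp_apply] at h'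
  have h2 := congrArg (TensorProduct.lift (LinearMap.mk₂ k (fun (x : A) (w : A ⊗[k] A) => φ (sl ψ w) • x)
    (by intros; simp) (by intros; exact smul_comm _ _ _) (by intros; simp [add_smul])
    (by intros; simp [mul_smul]))) h'
  convert h2 using 1
  · simp only [M, cv, LinearMap.comp_apply, AlgHom.toLinearMap_apply]
    generalize B.comul a = z
    induction z with
    | zero => simp
    | add x y hx hy => simp only [map_add, hx, hy]
    | tmul x y =>
      simp only [sl_tmul, lift_tmul, AlgHom.comp_apply, LinearMap.comp_apply,
        AlgHom.toLinearMap_apply]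
      generalize B.coadd y = w
      induction w with
      | zero => simp
      | add x y hx hy => simp only [map_add, add_smul, mul_add, hx, hy]
      | tmul x y => simp
  · generalize B.coadd a = z
    induction z with
    | zero => simp
    | add x y hx hy => simp only [map_add, hx, hy]
    | tmul x y =>
      simp only [M, lift_tmul, AlgHom.comp_apply, LinearMap.comp_apply,
        AlgHom.toLinearMap_apply, TensorProduct.map_tmul, LinearMap.mul'_apply]
      generalize B.comul x = w
      generalize B.comul y = w'
      induction w with
      | zero => simp
      | add x y hx hy => simp only [map_add, add_mul, hx, hy]
      | tmul x y =>
        induction w' with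
        | zero => simp
        | add x y hx hy => simp only [map_add, mul_add, hx, hy]
        | tmul x y => simp [smul_smul, mul_comm]

lemma sl_add (φ ψ : A →ₗ[k] k) (z : A ⊗[k] A) : sl (φ + ψ) z = sl φ z + sl ψ z := by
  induction z with
  | zero => simp
  | add x y hx hy => simp only [map_add, hx, hy]; abel
  | tmul x y => simp [add_smul]

lemma sl_smul (r : k) (φ : A →ₗ[k] k) (z : A ⊗[k] A) : sl (r • φ) z = r • sl φ z := by
  induction z with
  | zero => simp
  | add x y hx hy => simp only [map_add, hx, hy, smul_add]
  | tmul x y => simp [mul_smul]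

lemma matrix_form (V : Submodule k A) [Module.Finite k V] (hV : ∀ φ, ∀ v ∈ V, T B φ v ∈ V) :
    ∃ (n : ℕ) (c : Fin n → A) (t : Matrix (Fin n) (Fin n) A),
      Submodule.span k (Set.range c) = V ∧ (∀ j, B.coadd (c j) = ∑ i, c i ⊗ₜ[k] t i j) ∧
      (∀ l j, B.coadd (t l j) = ∑ i, t l i ⊗ₜ[k] t i j) ∧
      ∀ i j, B.counitAdd (t i j) = (1 : Matrix (Fin n) (Fin n) k) i j := by
  classical
  let b := Module.finBasis k V
  obtain ⟨π, hπ⟩ := exists_proj V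
  let χ : Fin (Module.finrank k V) → A →ₗ[k] k := fun i => b.coord i ∘ₗ π
  let c : Fin (Module.finrank k V) → A := fun i => (b i : A)
  let t : Matrix (Fin (Module.finrank k V)) (Fin (Module.finrank k V)) A :=
    fun i j => sr (χ i) (B.coadd (c j))
  have hsum : ∀ j, B.coadd (c j) = ∑ i, c i ⊗ₜ[k] t i j := by
    intro j
    have h1 := proj_fix V (V.subtype ∘ₗ π) (fun v hv => by
      simpa using congrArg Subtype.val (hπ ⟨v, hv⟩)) (B.coadd (c j))
      (fun φ => hV φ _ (b j).2)
    rw [← h1]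
    simp only [t]
    generalize B.coadd (c j) = z
    induction z with
    | zero => simp
    | add x y hx hy => simp only [map_add, TensorProduct.tmul_add, Finset.sum_add_distrib, hx, hy]
    | tmul x y =>
      simp only [LinearMap.rTensor_tmul, sr_tmul, LinearMap.comp_apply, Submodule.subtype_apply, χ, c]
      have hb := congrArg (fun v : V => (v : A) ⊗ₜ[k] y) (b.sum_repr (π x))
      simp only [Submodule.coe_sum, Submodule.coe_smul, TensorProduct.sum_tmul,
        TensorProduct.smul_tmul] at hb
      exact hb.symm
  have hχ : ∀ i j, χ i (c j) = (1 : Matrix _ _ k) i j := by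
    intro i j
    simp [χ, c, hπ, Matrix.one_apply, Finsupp.single_apply, eq_comm]
  refine ⟨_, c, t, ?_, hsum, ?_, ?_⟩
  · have := congrArg (Submodule.map V.subtype) b.span_eq
    rw [Submodule.map_span, ← Set.range_comp, Submodule.map_top, Submodule.range_subtype] at this
    exact this
  · intro l j
    have h := congrArg (sr (χ l)) (coassoc B (c j))
    have e1 : ∀ z : A ⊗[k] A, sr (χ l) (B.coadd.toLinearMap.lTensor A z) = B.coadd (sr (χ l) z) := by
      intro z
      induction z with
      | zero => simp
      | add x y hx hy => simp only [map_add, hx, hy]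
      | tmul x y => simp
    rw [e1] at h
    change B.coadd (sr (χ l) (B.coadd (c j))) = _
    rw [← h, hsum j]
    simp only [map_sum, LinearMap.rTensor_tmul, AlgHom.toLinearMap_apply]
    refine Finset.sum_congr rfl fun i _ => ?_
    simp only [t]
    generalize sr (χ i) (B.coadd (c j)) = y
    generalize B.coadd (c i) = w
    induction w with
    | zero => simp
    | add x y hx hy => simp only [map_add, TensorProduct.add_tmul, hx, hy]
    | tmul x y => simp [TensorProduct.smul_tmul']
  · intro i j
    change e0 B (sr (χ i) (B.coadd (c j))) = _
    rw [← slice_swap]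
    change χ i (T B (e0 B) (c j)) = _
    rw [T_counit, hχ]

/-- Fitting-type lemma. -/
lemma fitting {S : Type} [Ring S] [Algebra k S] (u : S) (hu : IsIntegral k u) :
    ∃ (m : ℕ) (a : Polynomial k), IsIdempotentElem (Polynomial.aeval u (a * Polynomial.X ^ (m + 1))) ∧
      (Polynomial.aeval u (a * Polynomial.X ^ (m + 1)) = 0 → u ^ (m + 1) = 0) := by
  obtain ⟨p, hp, hpu⟩ := hu
  have hpu : Polynomial.aeval u p = 0 := hpu
  obtain ⟨m, q, hq, hpq⟩ : ∃ (m : ℕ) (q : Polynomial k), ¬ Polynomial.X ∣ q ∧ p = Polynomial.X ^ m * q := by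
    obtain ⟨q, h1, h2⟩ := Polynomial.exists_eq_pow_rootMultiplicity_mul_and_not_dvd p hp.ne_zero 0
    simp only [map_zero, sub_zero] at h1 h2
    exact ⟨_, q, h2, h1⟩
  have hc : IsCoprime (Polynomial.X ^ (m + 1)) q :=
    ((Polynomial.irreducible_X.coprime_iff_not_dvd).2 hq).pow_left
  obtain ⟨a, b, hab⟩ := hc
  have hz : Polynomial.aeval u (Polynomial.X ^ (m + 1) * q) = 0 := by
    rw [pow_succ', mul_assoc, ← hpq, map_mul, hpu, mul_zero]
  refine ⟨m, a, ?_, fun h => ?_⟩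
  · rw [IsIdempotentElem, ← map_mul, ← sub_eq_zero, ← map_sub]
    have : a * Polynomial.X ^ (m + 1) * (a * Polynomial.X ^ (m + 1)) - a * Polynomial.X ^ (m + 1)
      = - (a * b) * (Polynomial.X ^ (m + 1) * q) := by linear_combination (a * Polynomial.X ^ (m + 1)) * hab
    rw [this, map_mul, hz, mul_zero]
  · have : (Polynomial.X : Polynomial k) ^ (m + 1) = Polynomial.X ^ (m + 1) * (a * Polynomial.X ^ (m + 1))
      + b * (Polynomial.X ^ (m + 1) * q) := by linear_combination (- Polynomial.X ^ (m + 1)) * hab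
    have h3 := congrArg (Polynomial.aeval u) this
    rw [map_add, map_mul, h, mul_zero, map_mul, hz, mul_zero, add_zero] at h3
    simpa using h3

lemma nilp_matrix (hconn : ∀ e : A, e * e = e → e = 0 ∨ e = 1) {n : ℕ}
    (t : Matrix (Fin n) (Fin n) A)
    (ht : ∀ l j, B.coadd (t l j) = ∑ i, t l i ⊗ₜ[k] t i j)
    (hε : ∀ i j, B.counitAdd (t i j) = (1 : Matrix (Fin n) (Fin n) k) i j)
    (φ : A →ₗ[k] k) (hφ : φ 1 = 0) : IsNilpotent (t.map φ) := by
  classical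
  let μ : (A →ₗ[k] k) → Matrix (Fin n) (Fin n) A := fun φ => t.map (M B φ)
  have μ_mul : ∀ φ ψ, μ (cv B φ ψ) = μ φ * μ ψ := by
    intro φ ψ
    ext l j
    simp only [μ, Matrix.map_apply, Matrix.mul_apply, M_cv, ht, map_sum, TensorProduct.map_tmul,
      LinearMap.mul'_apply]
  have μ_one : μ (e0 B) = 1 := by
    ext i j
    simp only [μ, Matrix.map_apply, M_counit, hε, Matrix.one_apply]
    split_ifs <;> simp
  have μ_add : ∀ φ ψ, μ (φ + ψ) = μ φ + μ ψ := by
    intro φ ψ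
    ext i j
    simp [μ, M, sl_add]
  have μ_smul : ∀ (r : k) φ, μ (r • φ) = r • μ φ := by
    intro r φ
    ext i j
    simp [μ, M, sl_smul]
  set u := μ φ with hu
  have hadj : ∀ x ∈ Algebra.adjoin k {u}, ∃ ψ, x = μ ψ := by
    intro x hx
    induction hx using Algebra.adjoin_induction with
    | mem x hx => exact ⟨φ, hx⟩
    | algebraMap r => exact ⟨r • e0 B, by rw [μ_smul, μ_one, Algebra.algebraMap_eq_smul_one]⟩
    | add x y _ _ hx hy =>
      obtain ⟨a, rfl⟩ := hx
      obtain ⟨b, rfl⟩ := hy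
      exact ⟨_, (μ_add a b).symm⟩
    | mul x y _ _ hx hy =>
      obtain ⟨a, rfl⟩ := hx
      obtain ⟨b, rfl⟩ := hy
      exact ⟨_, (μ_mul a b).symm⟩
  choose W hW1 hW2 using fun i j => exists_fd (B.comul (t i j))
  have hint : IsIntegral k u := by
    refine IsIntegral.of_mem_of_fg (Algebra.adjoin k {u}) ?_ u (Algebra.self_mem_adjoin_singleton k u)
    have : Module.Finite k (Algebra.adjoin k {u}) := by
      have hmem : ∀ (x : Algebra.adjoin k {u}) i j, x.1 i j ∈ W i j := by
        intro x i j
        obtain ⟨ψ, hψ⟩ := hadj x.1 x.2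
        rw [hψ]
        exact hW2 i j ψ
      let F : Algebra.adjoin k {u} →ₗ[k] (∀ i j, W i j) :=
        { toFun := fun x i j => ⟨x.1 i j, hmem x i j⟩
          map_add' := fun x y => rfl
          map_smul' := fun r x => rfl }
      refine Module.Finite.of_injective F ?_
      intro x y hxy
      apply Subtype.ext
      ext i j
      exact congrArg Subtype.val (congrFun (congrFun hxy i) j)
    exact (Module.Finite.iff_fg (N := Subalgebra.toSubmodule (Algebra.adjoin k {u}))).1 this
  obtain ⟨m, a, he, hz⟩ := fitting u hint
  set e := Polynomial.aeval u (a * Polynomial.X ^ (m + 1)) with hedef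
  have hue : B.counitAdd.mapMatrix u = 0 := by
    ext i j
    simp [hu, μ, counitAdd_M, hφ]
  have hee : B.counitAdd.mapMatrix e = 0 := by
    rw [hedef, ← Polynomial.aeval_algHom_apply, hue]
    simp
  have hdet : (1 - e).det = 1 := by
    have h1 : (1 - e).det * (1 - e).det = (1 - e).det := by
      rw [← Matrix.det_mul, he.one_sub.eq]
    have h2 : B.counitAdd (1 - e).det = 1 := by
      rw [AlgHom.map_det, map_sub, hee]
      simp
    rcases hconn _ h1 with h | h
    · rw [h, map_zero] at h2
      exact absurd h2 zero_ne_one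
    · exact h
  have hunit : IsUnit (1 - e) := by
    rw [Matrix.isUnit_iff_isUnit_det, hdet]
    exact isUnit_one
  have he0 : e = 0 := by
    apply hunit.mul_left_cancel
    rw [sub_mul, one_mul, he.eq, sub_self, mul_zero]
  refine ⟨m + 1, ?_⟩
  have h5 : t.map φ = B.counitMul.mapMatrix u := by
    ext i j
    simp [hu, μ, counitMul_M]
  rw [h5, ← map_pow, hz he0, map_zero]

lemma T_proper (hconn : ∀ e : A, e * e = e → e = 0 ∨ e = 1)
    (V : Submodule k A) [Module.Finite k V] (hV : ∀ φ, ∀ v ∈ V, T B φ v ∈ V)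
    (φ : A →ₗ[k] k) (hφ : φ 1 = 0) (hfix : V.map (T B φ) = V) : V = ⊥ := by
  obtain ⟨n, c, t, hspan, hc, ht, hε⟩ := matrix_form B V hV
  obtain ⟨m, hm⟩ := nilp_matrix B hconn t ht hε φ hφ
  have h1 : ∀ (m : ℕ) j, ((T B φ) ^ m) (c j) = ∑ i, ((t.map φ) ^ m) i j • c i := by
    intro m
    induction m with
    | zero => intro j; simp [Matrix.one_apply]
    | succ m ih =>
      intro j
      rw [pow_succ, Module.End.mul_apply]
      have : T B φ (c j) = ∑ i, φ (t i j) • c i := by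
        simp [T, hc]
      rw [this, map_sum]
      simp only [map_smul, ih, pow_succ, Matrix.mul_apply, Finset.smul_sum, Finset.sum_smul, Matrix.map_apply]
      rw [Finset.sum_comm]
      refine Finset.sum_congr rfl fun i _ => Finset.sum_congr rfl fun l _ => ?_
      rw [smul_smul, mul_comm]
  have h2 : ∀ m : ℕ, V.map ((T B φ) ^ m) = V := by
    intro m
    induction m with
    | zero => simp [Module.End.one_eq_id]
    | succ m ih => rw [pow_succ, Module.End.mul_eq_comp, Submodule.map_comp, hfix, ih]
  rw [← h2 m, ← hspan, Submodule.map_span, Submodule.span_eq_bot]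
  rintro _ ⟨_, ⟨j, rfl⟩, rfl⟩
  simp [h1, hm]

lemma exists_primitive (hconn : ∀ e : A, e * e = e → e = 0 ∨ e = 1) (I : Ideal A)
    (hIcounit : ∀ a ∈ I, B.counitAdd a = 0) (hIne : I ≠ RingHom.ker B.counitAdd) :
    ∃ x : A, x ∉ I ∧
      B.coadd x - x ⊗ₜ[k] (1 : A) - (1 : A) ⊗ₜ[k] x ∈ sideIdeal k A I := by
  classical
  let J : Submodule k A := I.restrictScalars k ⊔ (k ∙ (1 : A))
  obtain ⟨x, hxε, hxI⟩ : ∃ x, B.counitAdd x = 0 ∧ x ∉ I := by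
    by_contra! h
    exact hIne (le_antisymm (fun a ha => hIcounit a ha) (fun a ha => h a ha))
  have hJ : ∀ a ∈ J, ∃ i ∈ I, a = i + B.counitAdd a • 1 := by
    intro a ha
    obtain ⟨i, hi, w, hw, rfl⟩ := Submodule.mem_sup.1 ha
    obtain ⟨r, rfl⟩ := Submodule.mem_span_singleton.1 hw
    exact ⟨i, hi, by simp [hIcounit i hi]⟩
  let P : ℕ → Prop := fun d => ∃ V : Submodule k A, Module.Finite k V ∧
    (∀ φ, ∀ v ∈ V, T B φ v ∈ V) ∧ ¬ V ≤ J ∧ Module.finrank k V = d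
  have hP : ∃ d, P d := by
    let V : Submodule k A :=
      { carrier := {a | ∃ φ, a = T B φ x}
        add_mem' := by
          rintro _ _ ⟨φ, rfl⟩ ⟨ψ, rfl⟩
          exact ⟨φ + ψ, by simp [T, sl_add]⟩
        zero_mem' := ⟨(0 : k) • e0 B, by rw [T, LinearMap.comp_apply, sl_smul, zero_smul]⟩
        smul_mem' := by
          rintro r _ ⟨φ, rfl⟩
          exact ⟨r • φ, by simp [T, sl_smul]⟩ }
    obtain ⟨W, hW1, hW2⟩ := exists_fd (B.coadd x)
    have hVW : V ≤ W := by
      rintro _ ⟨φ, rfl⟩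
      exact hW2 φ
    refine ⟨_, V, Submodule.finiteDimensional_of_le hVW, ?_, ?_, rfl⟩
    · rintro φ _ ⟨ψ, rfl⟩
      exact ⟨_, T_comp B φ ψ x⟩
    · intro h
      obtain ⟨i, hi, hxi⟩ := hJ x (h ⟨e0 B, (T_counit B x).symm⟩)
      rw [hxε, zero_smul, add_zero] at hxi
      exact hxI (hxi ▸ hi)
  obtain ⟨V, hVf, hV, hVJ, hVd⟩ := Nat.find_spec hP
  have hkey : ∀ φ : A →ₗ[k] k, φ 1 = 0 → V.map (T B φ) ≤ J := by
    intro φ hφ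
    by_contra hcon
    have hle : V.map (T B φ) ≤ V := by
      rintro _ ⟨v, hv, rfl⟩
      exact hV φ v hv
    have hne : V.map (T B φ) ≠ V := by
      intro h
      have := T_proper B hconn V hV φ hφ h
      exact hVJ (this ▸ bot_le)
    have hlt := Submodule.finrank_lt_finrank_of_lt (lt_of_le_of_ne hle hne)
    rw [hVd] at hlt
    refine Nat.find_min hP hlt ⟨V.map (T B φ), inferInstance, ?_, hcon, rfl⟩
    rintro ψ _ ⟨v, hv, rfl⟩
    exact ⟨T B ψ v, hV ψ v hv, T_comm B φ ψ v⟩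
  obtain ⟨y, hyV, hyJ⟩ := Set.not_subset.1 hVJ
  set z := y - B.counitAdd y • (1 : A) with hz
  have hzε : B.counitAdd z = 0 := by simp [hz]
  refine ⟨z, fun hzI => hyJ ?_, mem_sideIdeal I _ fun φ => ?_⟩
  · have : y = z + B.counitAdd y • (1 : A) := by simp [hz]
    rw [this]
    exact add_mem (Submodule.mem_sup_left hzI)
      (Submodule.mem_sup_right (Submodule.smul_mem _ _ (Submodule.mem_span_singleton_self _)))
  · set ψ : A →ₗ[k] k := φ + (-(φ 1)) • e0 B with hψ
    have hψ1 : ψ 1 = 0 := by simp [hψ, e0]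
    have h1 : T B ψ z = T B ψ y := by
      rw [hz, map_sub, map_smul, T_one, hψ1]; simp
    obtain ⟨i, hi, h2⟩ := hJ (T B ψ z) (h1 ▸ hkey ψ hψ1 ⟨y, hyV, rfl⟩)
    have h3 : B.counitAdd (T B ψ z) = φ z := by
      change e0 B (T B ψ z) = φ z
      rw [counit_T]
      simp [hψ, e0, hzε]
    have h4 : T B ψ z = sl φ (B.coadd z) - φ 1 • z := by
      have h5 := T_counit B z
      simp only [T, LinearMap.comp_apply, AlgHom.toLinearMap_apply] at h5 ⊢
      rw [hψ, sl_add, sl_smul, h5, neg_smul, sub_eq_add_neg]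
    have h6 : sl φ (B.coadd z - z ⊗ₜ[k] (1 : A) - (1 : A) ⊗ₜ[k] z) = i := by
      rw [map_sub, map_sub, sl_tmul, sl_tmul, ← h4, h2, h3]; simp
    rw [h6]
    exact hi

end BR

/-- **Theorem 2.6**: over a field, every connected ring scheme of finite type is unipotent:
for every Hopf ideal `I ≠ ker ε⁺` of a connected `k`-biring `A` of finite type, the quotient
Hopf algebra `A/I` has a nonzero primitive element. -/
theorem connected_finiteType_ring_scheme_unipotent
    (k A : Type) [Field k] [CommRing A] [Algebra k A] (B : Biring k A)
    (hft : Algebra.FiniteType k A)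
    (hconn : ∀ e : A, e * e = e → e = 0 ∨ e = 1)
    (I : Ideal A)
    (hIcounit : ∀ a ∈ I, B.counitAdd a = 0)
    (hIantipode : ∀ a ∈ I, B.antipode a ∈ I)
    (hIcoadd : ∀ a ∈ I, B.coadd a ∈ sideIdeal k A I)
    (hIne : I ≠ RingHom.ker B.counitAdd) :
    ∃ x : A, x ∉ I ∧
      B.coadd x - x ⊗ₜ[k] (1 : A) - (1 : A) ⊗ₜ[k] x ∈ sideIdeal k A I := by
  exact BR.exists_primitive B hconn I hIcounit hIne
end

section
/- Let k be a field and A a k-biring whose only idempotent elements are 0 and 1 (so that Spec A is a connected affine ring scheme over k, not necessarily of finite type). Then the additive group scheme of Spec A is unipotent: for every Hopf ideal I of A with I ≠ ker ε⁺, there exists x ∈ A with x ∉ I and Δ⁺(x) − x ⊗ 1 − 1 ⊗ x ∈ I ⊗ A + A ⊗ I. (Corollary 2.9 of the paper: any affine connected ring scheme over a field is unipotent.) -/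
/- A `k`-biring: a commutative `k`-algebra `A` with coaddition, additive counit, antipode,
comultiplication and multiplicative counit, such that for every commutative `k`-algebra `R`
the induced operations make `Hom_{k-alg}(A, R)` a commutative unital ring (equivalently, the
diagrammatic coring/codistributivity axioms hold). -/

open scoped TensorProduct

section general
open Coalgebra

namespace RingSch

theorem idem_matrix_zero {k A : Type} [Field k] [CommRing A] [Algebra k A]
    (hconn : ∀ e : A, e * e = e → e = 0 ∨ e = 1) (ε : A →ₐ[k] k) {n : ℕ}
    (M : Matrix (Fin n) (Fin n) A) (hM : M * M = M) (hε : ∀ i j, ε (M i j) = 0) : M = 0 := by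
  have h1 : (1 - M) * (1 - M) = 1 - M := by
    simp [mul_sub, sub_mul, hM]
  have h2 : (1 - M).det * (1 - M).det = (1 - M).det := by
    rw [← Matrix.det_mul, h1]
  have h3 : ε (1 - M).det = 1 := by
    rw [AlgHom.map_det]
    have : ε.mapMatrix (1 - M) = 1 := by
      rw [map_sub, map_one]
      have : ε.mapMatrix M = 0 := by ext i j; simp [hε]
      rw [this, sub_zero]
    rw [this, Matrix.det_one]
  have h4 : (1 - M).det = 1 := by
    rcases hconn _ h2 with h | h
    · rw [h] at h3; simp at h3
    · exact h
  have h5 : IsUnit (1 - M) := by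
    rw [Matrix.isUnit_iff_isUnit_det, h4]; exact isUnit_one
  have h6 : (1 - M) = 1 := by
    apply h5.mul_left_cancel
    rw [h1, mul_one]
  simpa using h6

theorem mat_coef {k A : Type} [Field k] [AddCommGroup A] [Module k A] [Coalgebra k A] (x : A) :
    ∃ (n : ℕ) (c : Fin n → Fin n → A),
      (∀ i j, comul (R := k) (c i j) = ∑ l, c i l ⊗ₜ[k] c l j) ∧
      (∀ i j, counit (R := k) (c i j) = if i = j then 1 else 0) ∧
      x ∈ Submodule.span k (Set.range fun p : Fin n × Fin n => c p.1 p.2) := by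
  classical
  -- contraction
  let T : (A →ₗ[k] k) →ₗ[k] (A ⊗[k] A) →ₗ[k] A :=
    { toFun := fun φ => (TensorProduct.rid k A).toLinearMap ∘ₗ φ.lTensor A
      map_add' := by intros; ext; simp
      map_smul' := by intros; ext; simp }
  have hT : ∀ φ a b, T φ (a ⊗ₜ[k] b) = φ b • a := by intros; simp [T]
  let L : (A →ₗ[k] k) →ₗ[k] A := T.flip (comul x)
  have hL : ∀ φ, L φ = T φ (comul x) := fun _ => rfl
  let V : Submodule k A := LinearMap.range L
  -- comul x in V ⊗ A
  obtain ⟨s, hs⟩ : ∃ s : Finset (A × A), comul (R := k) x = ∑ p ∈ s, p.1 ⊗ₜ[k] p.2 :=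
    TensorProduct.exists_finset _
  have hVfin : FiniteDimensional k V := by
    have : V ≤ Submodule.span k ((s.image Prod.fst : Finset A) : Set A) := by
      rintro _ ⟨φ, rfl⟩
      rw [hL, hs, map_sum]
      simp only [hT]
      refine Submodule.sum_mem _ fun p hp => Submodule.smul_mem _ _ (Submodule.subset_span ?_)
      simp only [Finset.coe_image]
      exact ⟨p, hp, rfl⟩
    exact Submodule.finiteDimensional_of_le this
  have hxVA : comul (R := k) x ∈ LinearMap.range (V.subtype.rTensor A) := by
    let b := Module.Basis.ofVectorSpace k A
    obtain ⟨f, hf⟩ : ∃ f : Module.Basis.ofVectorSpaceIndex k A →₀ A,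
        comul (R := k) x = f.sum fun i a => a ⊗ₜ[k] b i := by
      obtain ⟨f, hf⟩ := TensorProduct.eq_repr_basis_right b (comul (R := k) x)
      exact ⟨f, hf.symm⟩
    rw [hf]
    refine Submodule.sum_mem _ fun i hi => ?_
    have : f i = L (b.coord i) := by
      rw [hL, hf, Finsupp.sum, map_sum]
      simp only [hT]
      rw [Finset.sum_eq_single i]
      · simp
      · intro j _ hj; simp [hj]
      · intro h; simp at h; simp [h]
    exact ⟨(⟨f i, by rw [this]; exact ⟨_, rfl⟩⟩ : V) ⊗ₜ b i, by simp⟩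
  have hVA : ∀ v : V, comul (R := k) (v : A) ∈ LinearMap.range (V.subtype.rTensor A) := by
    rintro ⟨_, φ, rfl⟩
    have key : comul (R := k) (L φ) = (T φ ∘ₗ comul (R := k)).lTensor A (comul (R := k) x) := by
      have h1 : ∀ t : A ⊗[k] A, comul (R := k) (T φ t) =
          (T φ).lTensor A (TensorProduct.assoc k A A A ((comul (R := k)).rTensor A t)) := by
        intro t
        induction t with
        | zero => simp
        | add a b ha hb => simp only [map_add, ha, hb]
        | tmul a b =>
          rw [hT, map_smul, LinearMap.rTensor_tmul]
          generalize comul (R := k) a = u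
          induction u with
          | zero => simp
          | add a b ha hb => simp only [map_add, ha, hb, smul_add, TensorProduct.add_tmul]
          | tmul c d => simp [hT]
      simp only [L, LinearMap.flip_apply]
      rw [h1, coassoc_apply, LinearMap.lTensor_comp]; rfl
    simp only
    rw [key]
    obtain ⟨t, ht⟩ := hxVA
    refine ⟨(T φ ∘ₗ comul (R := k)).lTensor V t, ?_⟩
    rw [← ht, ← LinearMap.comp_apply, ← LinearMap.comp_apply, LinearMap.rTensor_comp_lTensor,
      LinearMap.lTensor_comp_rTensor]
  have hxV : x ∈ V := by
    refine ⟨counit (R := k), ?_⟩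
    simp [L, T]
  let v := Module.finBasis k V
  have hex : ∀ j, ∃ c : Fin (Module.finrank k V) → A,
      comul (R := k) (v j : A) = ∑ i, (v i : A) ⊗ₜ[k] c i := by
    intro j
    obtain ⟨t, ht⟩ := hVA (v j)
    obtain ⟨f, hf⟩ := TensorProduct.eq_repr_basis_left v t
    refine ⟨f, ?_⟩
    rw [← ht, ← hf, Finsupp.sum_fintype _ _ (by simp)]
    simp
  choose c hc using hex
  have hvli : LinearIndependent k (fun i => (v i : A)) :=
    v.linearIndependent.map' V.subtype (by simp)
  have indep : ∀ {N : Type} [AddCommGroup N] [Module k N] (f g : Fin (Module.finrank k V) → N),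
      ∑ i, (v i : A) ⊗ₜ[k] f i = ∑ i, (v i : A) ⊗ₜ[k] g i → f = g := by
    intro N _ _ f g h
    have h' : ∑ i, (v i) ⊗ₜ[k] f i = ∑ i, (v i) ⊗ₜ[k] g i := by
      apply Module.Flat.rTensor_preserves_injective_linearMap (M := N) V.subtype
        V.injective_subtype
      simpa using h
    have h2 := congrArg (fun t => fun i => TensorProduct.lid k N ((v.coord i).rTensor N t)) h'
    ext i
    have := congrFun h2 i
    simpa [Finsupp.single_apply] using this
  refine ⟨_, fun i j => c j i, ?_, ?_, ?_⟩
  · intro i j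
    have h := coassoc_apply (R := k) (v j : A)
    rw [hc] at h
    simp only [map_sum, LinearMap.rTensor_tmul, LinearMap.lTensor_tmul, hc,
      TensorProduct.sum_tmul, TensorProduct.assoc_tmul] at h
    rw [Finset.sum_comm] at h
    simp only [← TensorProduct.tmul_sum] at h
    exact (congrFun (indep _ _ h) i).symm
  · intro i j
    have h := lTensor_counit_comul (R := k) (v j : A)
    rw [hc] at h
    simp only [map_sum, LinearMap.lTensor_tmul] at h
    have h' : (v j : A) ⊗ₜ[k] (1 : k) = ∑ i, (v i : A) ⊗ₜ[k] (if i = j then (1:k) else 0) := by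
      rw [Finset.sum_eq_single j]
      · simp
      · intro b _ hb; simp [hb]
      · simp
    rw [h'] at h
    exact congrFun (indep _ _ h) i
  · have hv : ∀ j, (v j : A) ∈ Submodule.span k
        (Set.range fun p : Fin _ × Fin _ => c p.2 p.1) := by
      intro j
      have h := rTensor_counit_comul (R := k) (v j : A)
      rw [hc] at h
      have h2 := congrArg (TensorProduct.lid k A) h
      simp only [map_sum, LinearMap.rTensor_tmul, TensorProduct.lid_tmul, one_smul] at h2
      rw [← h2]
      exact Submodule.sum_mem _ fun i _ => Submodule.smul_mem _ _
        (Submodule.subset_span ⟨(i, j), rfl⟩)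
    have := v.sum_repr ⟨x, hxV⟩
    have h2 := congrArg V.subtype this
    simp only [map_sum, map_smul, Submodule.subtype_apply] at h2
    rw [← h2]
    exact Submodule.sum_mem _ fun i _ => Submodule.smul_mem _ _ (hv i)

end RingSch

end general

section general
open Coalgebra WithConv

namespace RingSch

theorem conv_mat {k A : Type} [Field k] [AddCommGroup A] [Module k A] [Coalgebra k A]
    {n : ℕ} {c : Fin n → Fin n → A}
    (hc : ∀ i j, comul (R := k) (c i j) = ∑ l, c i l ⊗ₜ[k] c l j)
    (φ ψ : WithConv (A →ₗ[k] k)) (i j : Fin n) :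
    (φ * ψ) (c i j) = ∑ l, φ (c i l) * ψ (c l j) := by
  rw [LinearMap.convMul_apply, hc]; simp

/-- Finite sets are contained in finite-dimensional subcoalgebras. -/
theorem exists_fin_sub {k A : Type} [Field k] [AddCommGroup A] [Module k A] [Coalgebra k A]
    (s : Finset A) : ∃ W : Submodule k A, FiniteDimensional k W ∧ (∀ x ∈ s, x ∈ W) ∧
      ∀ φ ψ : WithConv (A →ₗ[k] k), (∀ w ∈ W, ψ w = 0) → ∀ w ∈ W, (φ * ψ) w = 0 := by
  classical
  induction s using Finset.induction_on with
  | empty => exact ⟨⊥, inferInstance, by simp, by simp⟩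
  | insert x s hx ih =>
    obtain ⟨W, hW, hs, hst⟩ := ih
    obtain ⟨n, c, hc, -, hxc⟩ := mat_coef (k := k) x
    set U := Submodule.span k (Set.range fun p : Fin n × Fin n => c p.1 p.2) with hU
    have hUf : FiniteDimensional k U := FiniteDimensional.span_of_finite k (Set.finite_range _)
    refine ⟨U ⊔ W, inferInstance, ?_, ?_⟩
    · intro y hy
      rcases Finset.mem_insert.1 hy with rfl | hy
      · exact Submodule.mem_sup_left hxc
      · exact Submodule.mem_sup_right (hs y hy)
    · intro φ ψ hψ w hw
      have : U ⊔ W ≤ LinearMap.ker (φ * ψ).ofConv := by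
        refine sup_le ?_ ?_
        · rw [hU, Submodule.span_le]
          rintro _ ⟨⟨i, j⟩, rfl⟩
          simp only [SetLike.mem_coe, LinearMap.mem_ker]
          rw [conv_mat hc]
          refine Finset.sum_eq_zero fun l _ => ?_
          rw [hψ _ (Submodule.mem_sup_left (Submodule.subset_span ⟨(l, j), rfl⟩)), mul_zero]
        · intro w hw
          exact hst φ ψ (fun w hw => hψ w (Submodule.mem_sup_right hw)) w hw
      exact this hw

theorem exists_idem_aux {k A R : Type} [Field k] [AddCommGroup A] [Module k A]
    [CommRing R] [Algebra k R] (ev : R →ₗ[k] A →ₗ[k] k) (one : A)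
    (h1' : ev 1 one = 1)
    (hmul1 : ∀ φ ψ, ev (φ * ψ) one = ev φ one * ev ψ one)
    (hprim : ∀ x : A, (∀ φ ψ : R, ev (φ * ψ) x = ev φ x * ev ψ one + ev φ one * ev ψ x) →
      ∀ φ, ev φ x = 0)
    (W : Submodule k A) [FiniteDimensional k W] (hW1 : one ∈ W)
    (hW : ∀ φ ψ : R, (∀ w ∈ W, ev ψ w = 0) → ∀ w ∈ W, ev (φ * ψ) w = 0) :
    ∃ u : R, ev u one = 0 ∧ (∀ w ∈ W, ev (u * u) w = ev u w) ∧
      ∀ g : R, ev g one = 0 → ∃ h : R, ∀ w ∈ W, ev g w = ev (h * u) w := by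
  let m : Ideal R :=
    { carrier := {φ | ev φ one = 0}
      zero_mem' := by simp
      add_mem' := fun {φ ψ} hφ hψ => by
        simp only [Set.mem_ofPred_eq] at *
        simp [hφ, hψ]
      smul_mem' := fun φ ψ hψ => by
        simp only [Set.mem_ofPred_eq] at *
        rw [smul_eq_mul, hmul1, hψ, mul_zero] }
  let J : Ideal R :=
    { carrier := {φ | ∀ w ∈ W, ev φ w = 0}
      zero_mem' := by simp
      add_mem' := fun {φ ψ} hφ hψ w hw => by
        rw [map_add, LinearMap.add_apply, hφ w hw, hψ w hw, add_zero]
      smul_mem' := fun φ ψ hψ => hW φ ψ hψ }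
  let res : R →ₗ[k] (W →ₗ[k] k) := LinearMap.lcomp k k W.subtype ∘ₗ ev
  have hres : ∀ φ : R, φ ∈ J ↔ res φ = 0 := by
    intro φ
    constructor
    · intro h; ext w; exact h w w.2
    · intro h w hw; exact LinearMap.congr_fun h ⟨w, hw⟩
  have hJm : J ≤ m := fun φ hφ => hφ one hW1
  have hkey : m ≤ m * m ⊔ J := by
    by_contra hcon
    obtain ⟨φ₀, hφ₀, hφ₀'⟩ := SetLike.not_le_iff_exists.1 hcon
    obtain ⟨lam, hl0, hl⟩ := Submodule.exists_le_ker_of_notMem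
      (p := ((m * m ⊔ J).restrictScalars k)) (v := φ₀) hφ₀'
    have hker : LinearMap.ker res ≤ LinearMap.ker lam := by
      intro φ hφ
      exact hl ((le_sup_right : J ≤ m * m ⊔ J) ((hres φ).2 hφ))
    obtain ⟨mu, hmu⟩ : ∃ mu : (W →ₗ[k] k) →ₗ[k] k, mu ∘ₗ res = lam := by
      have : lam ∈ LinearMap.range res.dualMap := by
        rw [LinearMap.range_dualMap_eq_dualAnnihilator_ker, Submodule.mem_dualAnnihilator]
        exact fun φ hφ => hker hφ
      exact this
    obtain ⟨w, hw⟩ := (Module.evalEquiv k W).surjective mu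
    have hlam : ∀ φ : R, lam φ = ev φ (w : A) := by
      intro φ
      rw [← hmu, ← hw]; rfl
    have hx0 := hprim ((w : A) - ev 1 (w : A) • one) (by
      intro φ ψ
      set x := (w : A) - ev 1 (w : A) • one with hx
      have hεx : ev 1 x = 0 := by simp [hx, h1']
      have hφ'1 : ∀ φ : R, ev (φ - ev φ one • 1) one = 0 := by
        intro φ
        simp [h1']
      have hl2 : lam ((φ - ev φ one • 1) * (ψ - ev ψ one • 1)) = 0 :=
        hl ((le_sup_left : m * m ≤ m * m ⊔ J) (Ideal.mul_mem_mul (hφ'1 φ) (hφ'1 ψ)))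
      have h3 : ev ((φ - ev φ one • 1) * (ψ - ev ψ one • 1)) x = 0 := by
        have h4 : ev ((φ - ev φ one • 1) * (ψ - ev ψ one • 1)) one = 0 := by
          rw [hmul1, hφ'1, zero_mul]
        rw [hlam] at hl2
        rw [hx, map_sub, map_smul, h4, hl2]; simp
      have h6 : (φ - ev φ one • 1) * (ψ - ev ψ one • 1) =
          φ * ψ - ev ψ one • φ - ev φ one • ψ + (ev φ one * ev ψ one) • 1 := by
        simp only [sub_mul, mul_sub, smul_mul_assoc, mul_smul_comm, one_mul, mul_one, mul_smul,
          smul_sub]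
        rw [smul_comm (ev ψ one) (ev φ one)]
        abel
      rw [h6] at h3
      simp only [map_add, map_sub, map_smul, LinearMap.add_apply, LinearMap.sub_apply,
        LinearMap.smul_apply, hεx, smul_eq_mul] at h3
      linear_combination h3) φ₀
    apply hl0
    have h8 : ev φ₀ one = 0 := hφ₀
    rw [map_sub, map_smul, h8, smul_zero, sub_zero] at hx0
    rw [hlam]; exact hx0
  let Q := R ⧸ J
  have hQfin : Module.Finite k Q := by
    have hle : LinearMap.ker res ≤ LinearMap.ker (Ideal.Quotient.mkₐ k J).toLinearMap := by
      intro φ hφ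
      exact Ideal.Quotient.eq_zero_iff_mem.2 ((hres φ).2 hφ)
    have e := res.quotKerEquivRange
    have : Module.Finite k (R ⧸ LinearMap.ker res) := Module.Finite.equiv e.symm
    refine Module.Finite.of_surjective ((LinearMap.ker res).liftQ _ hle) ?_
    intro q
    obtain ⟨r, rfl⟩ := Ideal.Quotient.mk_surjective q
    exact ⟨Submodule.Quotient.mk r, rfl⟩
  have hQn : IsNoetherianRing Q := IsNoetherianRing.of_finite k Q
  have hmQ : IsIdempotentElem (m.map (Ideal.Quotient.mk J)) := by
    refine le_antisymm Ideal.mul_le_left ?_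
    calc m.map (Ideal.Quotient.mk J) ≤ (m * m ⊔ J).map (Ideal.Quotient.mk J) := Ideal.map_mono hkey
      _ = _ := by rw [Ideal.map_sup, Ideal.map_mul, Ideal.map_quotient_self, sup_bot_eq]
  obtain ⟨e, he, hme⟩ := (Ideal.isIdempotentElem_iff_of_fg _ (IsNoetherian.noetherian _)).1 hmQ
  have heM : e ∈ m.map (Ideal.Quotient.mk J) := by
    rw [hme]; exact Submodule.mem_span_singleton_self e
  obtain ⟨u, hum, hue⟩ :=
    (Ideal.mem_map_iff_of_surjective _ Ideal.Quotient.mk_surjective).1 heM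
  refine ⟨u, hum, ?_, ?_⟩
  · have : u * u - u ∈ J := by
      rw [← Ideal.Quotient.eq_zero_iff_mem, map_sub, map_mul, hue, he.eq, sub_self]
    intro w hw
    have h0 := this w hw
    rw [map_sub, LinearMap.sub_apply] at h0
    exact sub_eq_zero.1 h0
  · intro g hg1
    have hgm : g ∈ m := hg1
    have hg2 : Ideal.Quotient.mk J g ∈ m.map (Ideal.Quotient.mk J) := Ideal.mem_map_of_mem _ hgm
    rw [hme] at hg2
    obtain ⟨q, hq⟩ := Submodule.mem_span_singleton.1 hg2
    obtain ⟨h, rfl⟩ := Ideal.Quotient.mk_surjective q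
    have : g - h * u ∈ J := by
      rw [← Ideal.Quotient.eq_zero_iff_mem, map_sub, map_mul, hue, ← hq, smul_eq_mul, sub_self]
    refine ⟨h, fun w hw => ?_⟩
    have h0 := this w hw
    rw [map_sub, LinearMap.sub_apply] at h0
    exact sub_eq_zero.1 h0

theorem exists_idem {k A : Type} [Field k] [AddCommGroup A] [Module k A] [Coalgebra k A]
    [IsCocomm k A] (I : Submodule k A) (one : A) (h1 : comul (R := k) one = one ⊗ₜ[k] one)
    (h1' : counit (R := k) one = 1)
    (hIε : ∀ a ∈ I, counit (R := k) a = 0)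
    (hImul : ∀ φ ψ : WithConv (A →ₗ[k] k), (∀ a ∈ I, φ a = 0) → (∀ a ∈ I, ψ a = 0) →
      ∀ a ∈ I, (φ * ψ) a = 0)
    (hprim : ∀ x : A, (∀ φ ψ : WithConv (A →ₗ[k] k), (∀ a ∈ I, φ a = 0) → (∀ a ∈ I, ψ a = 0) →
      (φ * ψ) x = φ x * ψ one + φ one * ψ x) → x ∈ I)
    (W : Submodule k A) [FiniteDimensional k W] (hW1 : one ∈ W)
    (hW : ∀ φ ψ : WithConv (A →ₗ[k] k), (∀ w ∈ W, ψ w = 0) → ∀ w ∈ W, (φ * ψ) w = 0) :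
    ∃ u : WithConv (A →ₗ[k] k), u one = 0 ∧ (∀ w ∈ W, (u * u) w = u w) ∧
      ∀ g : WithConv (A →ₗ[k] k), (∀ a ∈ I, g a = 0) → g one = 0 →
        ∃ h : WithConv (A →ₗ[k] k), ∀ w ∈ W, g w = (h * u) w := by
  let R : Subalgebra k (WithConv (A →ₗ[k] k)) :=
    { carrier := {φ | ∀ a ∈ I, φ a = 0}
      mul_mem' := fun {φ ψ} hφ hψ => hImul φ ψ hφ hψ
      add_mem' := fun {φ ψ} hφ hψ a ha => by
        change φ.ofConv a + ψ.ofConv a = 0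
        rw [hφ a ha, hψ a ha, add_zero]
      algebraMap_mem' := fun r a ha => by
        rw [LinearMap.convAlgebraMap_apply, hIε a ha]; simp }
  let ev : R →ₗ[k] A →ₗ[k] k :=
    { toFun := fun φ => φ.1.ofConv
      map_add' := fun _ _ => rfl
      map_smul' := fun _ _ => rfl }
  let _ : CommRing R := Subalgebra.toCommRing R
  obtain ⟨u, hu1, hu2, hu3⟩ := exists_idem_aux (R := R) ev one
    (by change counit (R := k) one = 1; exact h1')
    (by
      intro φ ψ
      change (φ.1 * ψ.1) one = φ.1 one * ψ.1 one
      rw [LinearMap.convMul_apply, h1]; simp)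
    (by
      intro x hx φ
      refine φ.2 x (hprim x fun φ ψ hφ hψ => hx ⟨φ, hφ⟩ ⟨ψ, hψ⟩))
    W hW1 (fun φ ψ => hW φ.1 ψ.1)
  exact ⟨u.1, hu1, hu2, fun g hgI hg1 => by
    obtain ⟨h, hh⟩ := hu3 ⟨g, hgI⟩ hg1
    exact ⟨h.1, hh⟩⟩

end RingSch

end general

namespace RingSch
open Algebra.TensorProduct

section biring
variable {k A : Type} [Field k] [CommRing A] [Algebra k A] (B : Biring k A)

theorem ptOp_comp (Δ : A →ₐ[k] A ⊗[k] A) {R S : Type} [CommRing R] [Algebra k R]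
    [CommRing S] [Algebra k S] (h : R →ₐ[k] S) (f g : A →ₐ[k] R) :
    h.comp (ptOp k A Δ f g) = ptOp k A Δ (h.comp f) (h.comp g) := by
  have : h.comp ((lmul' k (S := R)).comp (map f g)) =
      (lmul' k (S := S)).comp (map (h.comp f) (h.comp g)) := by
    ext <;> simp
  ext a
  exact DFunLike.congr_fun this (Δ a)

theorem ptOp_incl (Δ : A →ₐ[k] A ⊗[k] A) :
    ptOp k A Δ (includeLeft : A →ₐ[k] A ⊗[k] A) includeRight = Δ := by
  have : (lmul' k (S := A ⊗[k] A)).comp (map (includeLeft : A →ₐ[k] A ⊗[k] A) includeRight) =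
      AlgHom.id k _ := by
    ext <;> simp
  ext a
  exact DFunLike.congr_fun this (Δ a)

theorem ptOp_eq_lift (Δ : A →ₐ[k] A ⊗[k] A) {R : Type} [CommRing R] [Algebra k R]
    (f g : A →ₐ[k] R) : ptOp k A Δ f g = (lift f g (fun _ _ => Commute.all _ _)).comp Δ := by
  have : (lmul' k (S := R)).comp (map f g) = lift f g (fun _ _ => Commute.all _ _) := by
    ext <;> simp
  rw [← this]; rfl

theorem pt_mul_zero (R : Type) [CommRing R] [Algebra k R] (f : A →ₐ[k] R) :
    ptOp k A B.comul f (ptConst k A B.counitAdd) = ptConst k A B.counitAdd := by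
  set z : A →ₐ[k] R := ptConst k A B.counitAdd with hz
  set y := ptOp k A B.comul f z with hy
  have h1 : ptOp k A B.coadd y y = y := by
    rw [hy, ← B.pt_mul_add, hz, B.pt_zero_add]
  have h2 := B.pt_add_assoc R y y (y.comp B.antipode)
  rw [h1, B.pt_add_neg, B.pt_add_comm, B.pt_zero_add] at h2
  exact h2.symm

/-- `(ε⁺ ⊗ φ) Δ×`. -/
theorem counitAdd_comul (φ : A →ₗ[k] k) (a : A) :
    TensorProduct.lid k k (TensorProduct.map B.counitAdd.toLinearMap φ (B.comul a)) =
      B.counitAdd a * φ 1 := by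
  have h := pt_mul_zero B A (AlgHom.id k A)
  rw [B.pt_mul_comm, ptOp_eq_lift] at h
  have h2 := congrArg φ (DFunLike.congr_fun h a)
  have h3 : ∀ t : A ⊗[k] A, φ (lift (ptConst k A B.counitAdd) (AlgHom.id k A)
      (fun _ _ => Commute.all _ _) t) =
      TensorProduct.lid k k (TensorProduct.map B.counitAdd.toLinearMap φ t) := by
    intro t
    induction t with
    | zero => simp
    | add x y hx hy => simp only [map_add, hx, hy]
    | tmul x y => simp [ptConst, Algebra.ofId_apply, ← Algebra.smul_def]
  rw [← h3]
  refine h2.trans ?_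
  simp [ptConst, Algebra.ofId_apply, Algebra.algebraMap_eq_smul_one]

theorem counitMul_comul (a : A) :
    TensorProduct.lid k A (B.counitMul.toLinearMap.rTensor A (B.comul a)) = a := by
  have h := B.pt_one_mul A (AlgHom.id k A)
  rw [ptOp_eq_lift] at h
  have h2 := DFunLike.congr_fun h a
  have h3 : ∀ t : A ⊗[k] A, (lift (ptConst k A B.counitMul) (AlgHom.id k A)
      (fun _ _ => Commute.all _ _) t) =
      TensorProduct.lid k A (B.counitMul.toLinearMap.rTensor A t) := by
    intro t
    induction t with
    | zero => simp
    | add x y hx hy => simp only [map_add, hx, hy]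
    | tmul x y => simp [ptConst, Algebra.ofId_apply, ← Algebra.smul_def]
  rw [← h3]
  exact h2

/-- The additive coalgebra of a biring. -/
@[reducible] noncomputable def addCoalgebra : Coalgebra k A where
  comul := B.coadd.toLinearMap
  counit := B.counitAdd.toLinearMap
  coassoc := by
    let i1 : A →ₐ[k] (A ⊗[k] (A ⊗[k] A)) := includeLeft
    let i2 : A →ₐ[k] (A ⊗[k] (A ⊗[k] A)) := includeRight.comp includeLeft
    let i3 : A →ₐ[k] (A ⊗[k] (A ⊗[k] A)) := includeRight.comp includeRight
    have h := B.pt_add_assoc (A ⊗[k] (A ⊗[k] A)) i1 i2 i3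
    have hr : ptOp k A B.coadd i1 (ptOp k A B.coadd i2 i3) =
        (map (AlgHom.id k A) B.coadd).comp B.coadd := by
      have e1 : ptOp k A B.coadd i2 i3 = includeRight.comp B.coadd := by
        conv_rhs => rw [← ptOp_incl B.coadd, ptOp_comp]
      rw [e1, ptOp_eq_lift]
      congr 1
      ext <;> simp [i1]
    have hl : ptOp k A B.coadd (ptOp k A B.coadd i1 i2) i3 =
        ((Algebra.TensorProduct.assoc k k k A A A).toAlgHom.comp (map B.coadd (AlgHom.id k A))).comp B.coadd := by
      let j : A ⊗[k] A →ₐ[k] (A ⊗[k] (A ⊗[k] A)) := (Algebra.TensorProduct.assoc k k k A A A).toAlgHom.comp includeLeft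
      have e1 : ptOp k A B.coadd i1 i2 = j.comp B.coadd := by
        conv_rhs => rw [← ptOp_incl B.coadd, ptOp_comp]
        congr 1 <;> ext <;> simp [j, i1, i2]
      rw [e1, ptOp_eq_lift]
      congr 1
      ext <;> simp [i3, j]
      rfl
    rw [hl, hr] at h
    ext a
    exact DFunLike.congr_fun h a
  rTensor_counit_comp_comul := by
    have h := B.pt_zero_add A (AlgHom.id k A)
    rw [ptOp_eq_lift] at h
    ext a
    apply (TensorProduct.lid k A).injective
    have h2 := DFunLike.congr_fun h a
    have h3 : ∀ t : A ⊗[k] A, (lift (ptConst k A B.counitAdd) (AlgHom.id k A)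
        (fun _ _ => Commute.all _ _) t) =
        TensorProduct.lid k A (B.counitAdd.toLinearMap.rTensor A t) := by
      intro t
      induction t with
      | zero => simp
      | add x y hx hy => simp only [map_add, hx, hy]
      | tmul x y => simp [ptConst, Algebra.ofId_apply, ← Algebra.smul_def]
    have h4 := h3 (B.coadd a)
    simpa using h4.symm.trans h2
  lTensor_counit_comp_comul := by
    have h := B.pt_zero_add A (AlgHom.id k A)
    rw [B.pt_add_comm, ptOp_eq_lift] at h
    ext a
    apply (TensorProduct.rid k A).injective
    have h2 := DFunLike.congr_fun h a
    have h3 : ∀ t : A ⊗[k] A, (lift (AlgHom.id k A) (ptConst k A B.counitAdd)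
        (fun _ _ => Commute.all _ _) t) =
        TensorProduct.rid k A (B.counitAdd.toLinearMap.lTensor A t) := by
      intro t
      induction t with
      | zero => simp
      | add x y hx hy => simp only [map_add, hx, hy]
      | tmul x y => simp [ptConst, Algebra.ofId_apply, Algebra.smul_def, mul_comm]
    have h4 := h3 (B.coadd a)
    simpa using h4.symm.trans h2

theorem addCocomm : letI := addCoalgebra B; Coalgebra.IsCocomm k A := by
  let _ := addCoalgebra B
  refine ⟨?_⟩
  have h := B.pt_add_comm (A ⊗[k] A) includeLeft includeRight
  rw [ptOp_incl, ptOp_eq_lift] at h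
  ext a
  have h2 := DFunLike.congr_fun h a
  have h3 : ∀ t : A ⊗[k] A, (lift (includeRight : A →ₐ[k] A ⊗[k] A) includeLeft
        (fun _ _ => Commute.all _ _) t) = TensorProduct.comm k A A t := by
      intro t
      induction t with
      | zero => simp
      | add x y hx hy => simp only [map_add, hx, hy]
      | tmul x y => simp
  exact (h3 _).symm.trans h2.symm

/-- `F φ = (id ⊗ φ) Δ×`. -/
noncomputable def F (φ : A →ₗ[k] k) : A →ₗ[k] A :=
  (TensorProduct.rid k A).toLinearMap ∘ₗ φ.lTensor A ∘ₗ B.comul.toLinearMap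

theorem F_mul (φ ψ : A →ₗ[k] k) (a : A) :
    LinearMap.mul' k A (TensorProduct.map (F B φ) (F B ψ) (B.coadd a)) =
    F B (LinearMap.mul' k k ∘ₗ TensorProduct.map φ ψ ∘ₗ B.coadd.toLinearMap) a := by
  let i1 : A →ₐ[k] (A ⊗[k] (A ⊗[k] A)) := includeLeft
  let i2 : A →ₐ[k] (A ⊗[k] (A ⊗[k] A)) := includeRight.comp includeLeft
  let i3 : A →ₐ[k] (A ⊗[k] (A ⊗[k] A)) := includeRight.comp includeRight
  have h := B.pt_mul_add (A ⊗[k] (A ⊗[k] A)) i1 i2 i3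
  let Φ : (A ⊗[k] (A ⊗[k] A)) →ₗ[k] A := (TensorProduct.rid k A).toLinearMap ∘ₗ
    (LinearMap.mul' k k ∘ₗ TensorProduct.map φ ψ).lTensor A
  have h2 := congrArg Φ (DFunLike.congr_fun h a)
  have e1 : ptOp k A B.coadd i2 i3 = includeRight.comp B.coadd := by
    conv_rhs => rw [← ptOp_incl B.coadd, ptOp_comp]
  have hl : ∀ t : A ⊗[k] A, Φ (lift i1 (includeRight.comp B.coadd)
      (fun _ _ => Commute.all _ _) t) = TensorProduct.rid k A
        ((LinearMap.mul' k k ∘ₗ TensorProduct.map φ ψ ∘ₗ B.coadd.toLinearMap).lTensor A t) := by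
    intro t
    induction t with
    | zero => simp
    | add x y hx hy => simp only [map_add, hx, hy]
    | tmul x y => simp [Φ, i1]
  have hm : ∀ s t : A ⊗[k] A, Φ (lift i1 i2 (fun _ _ => Commute.all _ _) s *
      lift i1 i3 (fun _ _ => Commute.all _ _) t) =
      TensorProduct.rid k A (φ.lTensor A s) * TensorProduct.rid k A (ψ.lTensor A t) := by
    intro s t
    induction s with
    | zero => simp
    | add x y hx hy => simp only [map_add, add_mul, hx, hy]
    | tmul x y =>
      induction t with
      | zero => simp
      | add x y hx hy => simp only [map_add, mul_add, hx, hy]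
      | tmul p q =>
        simp [Φ, i1, i2, i3, mul_smul, smul_comm (φ y) (ψ q)]
  have hr : ∀ t : A ⊗[k] A, Φ (lift (ptOp k A B.comul i1 i2) (ptOp k A B.comul i1 i3)
      (fun _ _ => Commute.all _ _) t) =
      LinearMap.mul' k A (TensorProduct.map (F B φ) (F B ψ) t) := by
    intro t
    induction t with
    | zero => simp
    | add x y hx hy => simp only [map_add, hx, hy]
    | tmul x y =>
      rw [lift_tmul, ptOp_eq_lift, ptOp_eq_lift]
      exact hm _ _
  rw [e1, ptOp_eq_lift B.comul, ptOp_eq_lift B.coadd] at h2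
  exact (hr _).symm.trans (h2.symm.trans (hl _))

theorem mem_sideIdeal (I : Ideal A) (t : A ⊗[k] A)
    (h : ∀ φ ψ : A →ₗ[k] k, (∀ a ∈ I, φ a = 0) → (∀ a ∈ I, ψ a = 0) →
      LinearMap.mul' k k (TensorProduct.map φ ψ t) = 0) : t ∈ sideIdeal k A I := by
  let I' : Submodule k A := I.restrictScalars k
  have h0 : TensorProduct.map I'.mkQ I'.mkQ t = 0 := by
    let b := Module.Basis.ofVectorSpace k (A ⧸ I')
    apply (b.tensorProduct b).repr.injective
    ext ⟨i, j⟩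
    have h1 := h (b.coord i ∘ₗ I'.mkQ) (b.coord j ∘ₗ I'.mkQ)
      (fun a ha => by
        have : I'.mkQ a = 0 := by simpa [I'] using ha
        simp only [LinearMap.comp_apply, this, map_zero])
      (fun a ha => by
        have : I'.mkQ a = 0 := by simpa [I'] using ha
        simp only [LinearMap.comp_apply, this, map_zero])
    rw [TensorProduct.map_comp, LinearMap.comp_apply] at h1
    rw [map_zero, Finsupp.zero_apply, ← h1]
    generalize TensorProduct.map I'.mkQ I'.mkQ t = s
    induction s with
    | zero => simp
    | add x y hx hy => simp only [map_add, Finsupp.add_apply, hx, hy]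
    | tmul x y => simp [mul_comm]
  have hker : t ∈ LinearMap.ker (TensorProduct.map I'.mkQ I'.mkQ) := h0
  have hex : Function.Exact I'.subtype I'.mkQ := by
    rw [LinearMap.exact_iff]; simp
  rw [TensorProduct.map_ker hex I'.mkQ_surjective hex I'.mkQ_surjective] at hker
  refine (sup_le ?_ ?_ : _ ≤ sideIdeal k A I) hker
  · rintro _ ⟨s, rfl⟩
    induction s with
    | zero => simp
    | add x y hx hy => rw [map_add]; exact Submodule.add_mem _ hx hy
    | tmul x y => exact Submodule.subset_span ⟨y, y.2, x, Or.inr rfl⟩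
  · rintro _ ⟨s, rfl⟩
    induction s with
    | zero => simp
    | add x y hx hy => rw [map_add]; exact Submodule.add_mem _ hx hy
    | tmul x y => exact Submodule.subset_span ⟨x, x.2, y, Or.inl rfl⟩

theorem of_mem_sideIdeal (I : Ideal A) (t : A ⊗[k] A) (ht : t ∈ sideIdeal k A I)
    (φ ψ : A →ₗ[k] k) (hφ : ∀ a ∈ I, φ a = 0) (hψ : ∀ a ∈ I, ψ a = 0) :
      LinearMap.mul' k k (TensorProduct.map φ ψ t) = 0 := by
  have : sideIdeal k A I ≤ LinearMap.ker (LinearMap.mul' k k ∘ₗ TensorProduct.map φ ψ) := by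
    refine Submodule.span_le.2 ?_
    rintro _ ⟨i, hi, a, rfl | rfl⟩ <;> simp [hφ, hψ, hi]
  exact this ht

end biring
end RingSch

/-- **Corollary 2.9**: any affine connected ring scheme over a field is unipotent:
for every Hopf ideal `I ≠ ker ε⁺` of a connected `k`-biring `A`, the quotient
Hopf algebra `A/I` has a nonzero primitive element. -/
theorem connected_affine_ring_scheme_unipotent
    (k A : Type) [Field k] [CommRing A] [Algebra k A] (B : Biring k A)
    (hconn : ∀ e : A, e * e = e → e = 0 ∨ e = 1)
    (I : Ideal A)
    (hIcounit : ∀ a ∈ I, B.counitAdd a = 0)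
    (hIantipode : ∀ a ∈ I, B.antipode a ∈ I)
    (hIcoadd : ∀ a ∈ I, B.coadd a ∈ sideIdeal k A I)
    (hIne : I ≠ RingHom.ker B.counitAdd) :
    ∃ x : A, x ∉ I ∧
      B.coadd x - x ⊗ₜ[k] (1 : A) - (1 : A) ⊗ₜ[k] x ∈ sideIdeal k A I := by
  classical
  let _ := RingSch.addCoalgebra B
  have _ := RingSch.addCocomm B
  by_contra hno
  push Not at hno
  apply hIne
  have hcom : ∀ a : A, Coalgebra.comul (R := k) a = B.coadd a := fun _ => rfl
  have hcou : ∀ a : A, Coalgebra.counit (R := k) a = B.counitAdd a := fun _ => rfl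
  have hx : ∀ x : A, ∀ g : WithConv (A →ₗ[k] k), (∀ a ∈ I, g a = 0) → g 1 = 0 → g x = 0 := by
    intro x g hgI hg1
    obtain ⟨n, c, hc, hcε, hxc⟩ := RingSch.mat_coef (k := k) x
    -- second components of the comultiplications of the matrix coefficients
    have hs : ∀ i j, ∃ s : Finset (A × A), B.comul (c i j) = ∑ p ∈ s, p.1 ⊗ₜ[k] p.2 :=
      fun i j => TensorProduct.exists_finset _
    choose s hs using hs
    let S : Finset A := insert 1 (Finset.univ.biUnion fun i => Finset.univ.biUnion fun j =>
      (s i j).image Prod.snd)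
    obtain ⟨W, hWf, hSW, hW⟩ := RingSch.exists_fin_sub (k := k) S
    have hsW : ∀ i j, ∀ p ∈ s i j, p.2 ∈ W := by
      intro i j p hp
      apply hSW
      simp only [S, Finset.mem_insert, Finset.mem_biUnion, Finset.mem_univ, true_and,
        Finset.mem_image]
      exact Or.inr ⟨i, j, p, hp, rfl⟩
    have hcW : ∀ i j, c i j ∈ W := by
      intro i j
      rw [← RingSch.counitMul_comul B (c i j), hs]
      simp only [map_sum, LinearMap.rTensor_tmul, TensorProduct.lid_tmul]
      exact Submodule.sum_mem _ fun p hp => Submodule.smul_mem _ _ (hsW i j p hp)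
    obtain ⟨u, hu1, hu2, hu3⟩ := RingSch.exists_idem (k := k) (I.restrictScalars k) (1 : A)
      (by rw [hcom, map_one]; rfl) (by rw [hcou, map_one]) hIcounit
      (by
        intro φ ψ hφ hψ a ha
        exact RingSch.of_mem_sideIdeal I _ (hIcoadd a ha) φ.ofConv ψ.ofConv hφ hψ)
      (by
        intro y hy
        by_contra hyI
        refine hno y hyI (RingSch.mem_sideIdeal I _ fun φ ψ hφ hψ => ?_)
        have h := hy (WithConv.toConv φ) (WithConv.toConv ψ) hφ hψ
        rw [LinearMap.convMul_apply, hcom] at h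
        simp only [map_sub, TensorProduct.map_tmul, LinearMap.mul'_apply]
        linear_combination h)
      W (hSW 1 (Finset.mem_insert_self _ _)) hW
    have hF : ∀ φ i j, RingSch.F B φ (c i j) = ∑ p ∈ s i j, φ p.2 • p.1 := by
      intro φ i j
      simp [RingSch.F, hs]
    let M : Matrix (Fin n) (Fin n) A := fun i j => RingSch.F B u.ofConv (c i j)
    have hMM : M * M = M := by
      ext i j
      have h := RingSch.F_mul B u.ofConv u.ofConv (c i j)
      rw [← hcom, hc] at h
      simp only [map_sum, TensorProduct.map_tmul, LinearMap.mul'_apply] at h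
      rw [Matrix.mul_apply]
      refine h.trans ?_
      change RingSch.F B (u * u).ofConv (c i j) = RingSch.F B u.ofConv (c i j)
      rw [hF, hF]
      exact Finset.sum_congr rfl fun p hp => by rw [hu2 _ (hsW i j p hp)]
    have hMε : ∀ i j, B.counitAdd (M i j) = 0 := by
      intro i j
      have h := RingSch.counitAdd_comul B u.ofConv (c i j)
      rw [hu1, mul_zero, hs] at h
      simp only [M, hF]
      simp only [map_sum, TensorProduct.map_tmul, TensorProduct.lid_tmul] at h
      rw [map_sum, ← h]
      exact Finset.sum_congr rfl fun p hp => by simp [mul_comm]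
    have hM0 := RingSch.idem_matrix_zero hconn B.counitAdd M hMM hMε
    have huc : ∀ i j, u (c i j) = 0 := by
      intro i j
      have h := congrArg B.counitMul (congrFun (congrFun hM0 i) j)
      simp only [M, hF, Matrix.zero_apply, map_zero] at h
      rw [← h, ← RingSch.counitMul_comul B (c i j), hs]
      simp only [map_sum, LinearMap.rTensor_tmul, TensorProduct.lid_tmul, map_smul]
      exact Finset.sum_congr rfl fun p hp => by simp [mul_comm]
    obtain ⟨h, hh⟩ := hu3 g hgI hg1
    have hgc : ∀ i j, g (c i j) = 0 := by
      intro i j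
      rw [hh _ (hcW i j), RingSch.conv_mat hc]
      exact Finset.sum_eq_zero fun l _ => by rw [huc, mul_zero]
    have hle : Submodule.span k (Set.range fun p : Fin n × Fin n => c p.1 p.2) ≤
        LinearMap.ker g.ofConv := by
      rw [Submodule.span_le]
      rintro _ ⟨⟨i, j⟩, rfl⟩
      exact hgc i j
    exact hle hxc
  ext x
  refine ⟨fun h => hIcounit x h, fun h => ?_⟩
  have h0 : B.counitAdd x = 0 := h
  by_contra hxI
  obtain ⟨f, hf0, hf⟩ := Submodule.exists_le_ker_of_notMem (p := I.restrictScalars k) (v := x) hxI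
  apply hf0
  have h2 := hx x (WithConv.toConv (f - f 1 • B.counitAdd.toLinearMap))
    (fun a ha => by
      have : f a = 0 := hf ha
      simp [this, hIcounit a ha]) (by simp)
  simpa [h0] using h2
end

section
/- Let k be a field of characteristic 0 and A a k-k-biring. Let P = {x ∈ A : Δ⁺(x) = x ⊗ 1 + 1 ⊗ x} be the k-submodule of primitive elements of A. Then the canonical k-algebra homomorphism from the symmetric algebra Sym_k(P) to A extending the inclusion P ↪ A is bijective; in particular A is a polynomial algebra on any k-basis of P. (This is the underlying-algebra content of Theorem 4.5 of the paper: every plethory over a field of characteristic zero is linear, i.e., isomorphic to the free plethory Sym(Prim(Q)) on its bialgebra of primitives.) -/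
/- A `k`-biring: a commutative `k`-algebra `A` with coaddition, additive counit, antipode,
comultiplication and multiplicative counit, such that for every commutative `k`-algebra `R`
the induced operations make `Hom_{k-alg}(A, R)` a commutative unital ring (equivalently, the
diagrammatic coring/codistributivity axioms hold). -/

open scoped TensorProduct

/-- A `k`-`k`-biring: a `k`-biring `A` together with a map `β` from `k` to the set of
`k`-algebra homomorphisms `A → k` such that `β 0 = ε⁺`, `β 1 = ε×`,
`β (c + c') = (β c ⊗ β c') ∘ Δ⁺` and `β (c * c') = (β c ⊗ β c') ∘ Δ×`; equivalently, an
affine `k`-algebra scheme over `k`. -/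
structure Bibiring (k A : Type) [Field k] [CommRing A] [Algebra k A]
    extends Biring k A where
  beta : k → (A →ₐ[k] k)
  beta_zero : beta 0 = counitAdd
  beta_one : beta 1 = counitMul
  beta_add : ∀ c c' : k, beta (c + c') = ptOp k A coadd (beta c) (beta c')
  beta_mul : ∀ c c' : k, beta (c * c') = ptOp k A comul (beta c) (beta c')

/-- The `k`-submodule of primitive elements `{x ∈ A : Δ⁺(x) = x ⊗ 1 + 1 ⊗ x}` of a
`k`-biring `A`. -/
noncomputable def primitives (k A : Type) [Field k] [CommRing A] [Algebra k A]
    (B : Biring k A) : Submodule k A where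
  carrier := {x : A | B.coadd x = x ⊗ₜ[k] (1 : A) + (1 : A) ⊗ₜ[k] x}
  add_mem' := by
    intro a b ha hb
    simp only [Set.mem_setOf_eq, map_add] at *
    rw [ha, hb, TensorProduct.add_tmul, TensorProduct.tmul_add]
    abel
  zero_mem' := by
    simp only [Set.mem_setOf_eq, map_zero, TensorProduct.zero_tmul,
      TensorProduct.tmul_zero, add_zero]
  smul_mem' := by
    intro c x hx
    simp only [Set.mem_setOf_eq, map_smul] at *
    rw [hx, smul_add, TensorProduct.smul_tmul', TensorProduct.tmul_smul]

open scoped TensorProduct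

theorem bx_unip_matrix {K : Type} [Field K] [IsAlgClosed K] {d : ℕ}
    (M : Matrix (Fin d) (Fin d) K) (hM : IsUnit M)
    (h : ∀ n : ℕ, 0 < n → ∃ u : (Matrix (Fin d) (Fin d) K)ˣ, M ^ n = u * M * (u⁻¹ : (Matrix (Fin d) (Fin d) K)ˣ)) :
    IsNilpotent (M - 1) := by
  have hE : ∀ n : ℕ, 0 < n → (fun x : K => x ^ n) '' spectrum K M = spectrum K M := by
    intro n hn
    obtain ⟨u, hu⟩ := h n hn
    rw [← spectrum.map_pow_of_pos M hn, hu, spectrum.units_conjugate]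
  have hfin : (spectrum K M).Finite := Matrix.finite_spectrum M
  have h1 : ∀ x ∈ spectrum K M, x = 1 := by
    intro x hx
    have hx0 : x ≠ 0 := by
      rintro rfl
      exact (spectrum.zero_notMem K hM) hx
    have hpow : ∀ n : ℕ, 0 < n → x ^ n ∈ spectrum K M := fun n hn => by
      rw [← hE n hn]; exact ⟨x, hx, rfl⟩
    obtain ⟨a, b, hab, heq⟩ : ∃ a b : ℕ, a < b ∧ x ^ (a + 1) = x ^ (b + 1) := by
      have := hfin.to_subtype
      obtain ⟨a, b, hne, h⟩ := Finite.exists_ne_map_eq_of_infinite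
        (fun n : ℕ => (⟨x ^ (n + 1), hpow _ n.succ_pos⟩ : spectrum K M))
      have h' : x ^ (a + 1) = x ^ (b + 1) := congrArg Subtype.val h
      rcases lt_or_gt_of_ne hne with hl | hl
      · exact ⟨a, b, hl, h'⟩
      · exact ⟨b, a, hl, h'.symm⟩
    have ho : x ^ (b - a) = 1 := by
      have : x ^ (b + 1) = x ^ (a + 1) * x ^ (b - a) := by rw [← pow_add]; congr 1; omega
      rw [this] at heq
      exact (mul_right_eq_self₀.mp heq.symm).resolve_right (pow_ne_zero _ hx0)
    have hpos : 0 < b - a := by omega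
    have hinj : Set.InjOn (fun y : K => y ^ (b - a)) (spectrum K M) := by
      have hs : Set.SurjOn (fun y : K => y ^ (b - a)) (spectrum K M) (spectrum K M) := by
        intro y hy; rw [hE _ hpos]; exact hy
      have hm : Set.MapsTo (fun y : K => y ^ (b - a)) (spectrum K M) (spectrum K M) := by
        intro y hy; rw [← hE _ hpos]; exact ⟨y, hy, rfl⟩
      exact ((hfin.surjOn_iff_bijOn_of_mapsTo hm).mp hs).injOn
    have hone : (1 : K) ∈ spectrum K M := ho ▸ hpow _ hpos
    exact hinj hx hone (by simp [ho])
  have hch : M.charpoly = (Polynomial.X - Polynomial.C 1) ^ d := by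
    have hs := (IsAlgClosed.splits M.charpoly).eq_prod_roots_of_monic M.charpoly_monic
    have hr : M.charpoly.roots = Multiset.replicate d 1 := by
      rw [Multiset.eq_replicate]
      constructor
      · rw [← (IsAlgClosed.splits M.charpoly).natDegree_eq_card_roots, M.charpoly_natDegree_eq_dim]
        simp
      · intro b hb
        apply h1
        rw [Matrix.mem_spectrum_iff_isRoot_charpoly]
        exact Polynomial.isRoot_of_mem_roots hb
    rw [hs, hr]; simp
  refine ⟨d, ?_⟩
  have := M.aeval_self_charpoly
  rw [hch] at this
  simpa using this

theorem bx_unip_end {k V : Type} [Field k] [AddCommGroup V] [Module k V] [FiniteDimensional k V]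
    (T : Module.End k V) (hT : IsUnit T)
    (h : ∀ n : ℕ, 0 < n → ∃ u : (Module.End k V)ˣ, T ^ n = u * T * (u⁻¹ : (Module.End k V)ˣ)) :
    IsNilpotent (T - 1) := by
  let b := Module.finBasis k V
  let φ : Module.End k V →+* Matrix (Fin (Module.finrank k V)) (Fin (Module.finrank k V)) (AlgebraicClosure k) :=
    (RingHom.mapMatrix (algebraMap k (AlgebraicClosure k))).comp
      ((LinearMap.toMatrixAlgEquiv b).toAlgHom.toRingHom)
  have hφ : Function.Injective φ := by
    intro x y hxy
    apply (LinearMap.toMatrixAlgEquiv b).injective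
    exact Matrix.map_injective (algebraMap k (AlgebraicClosure k)).injective hxy
  have := bx_unip_matrix (φ T) (hT.map φ) (by
    intro n hn
    obtain ⟨u, hu⟩ := h n hn
    refine ⟨Units.map φ.toMonoidHom u, ?_⟩
    rw [← map_pow, hu, map_mul, map_mul]
    simp [← map_inv])
  rw [← map_one φ, ← map_sub] at this
  exact (IsNilpotent.map_iff hφ).mp this

theorem bx_fwdDiff {k : Type} [Field k] [CharZero k] (V : Submodule k (k → k))
    [FiniteDimensional k V] (hV : ∀ f ∈ V, ∀ s t : k, (fun x => f (s * x + t)) ∈ V)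
    (f : k → k) (hf : f ∈ V) : ∃ d : ℕ, (fwdDiff (1 : k))^[d] f = 0 := by
  let A : k → k → Module.End k V := fun s t =>
    { toFun := fun g => ⟨fun x => g.1 (s * x + t), hV g.1 g.2 s t⟩
      map_add' := fun _ _ => rfl
      map_smul' := fun _ _ => rfl }
  have hA : ∀ s t (g : V) (x : k), (A s t g).1 x = g.1 (s * x + t) := fun _ _ _ _ => rfl
  have hmul : ∀ s t s' t', A s t * A s' t' = A (s' * s) (s' * t + t') := by
    intro s t s' t'
    ext g x
    simp only [Module.End.mul_apply, hA]
    ring_nf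
  have hone : A 1 0 = 1 := by
    ext g x
    simp [hA]
  have hpow : ∀ n : ℕ, A 1 1 ^ n = A 1 n := by
    intro n
    induction n with
    | zero => simp [hone]
    | succ n ih => rw [pow_succ, ih, hmul]; simp
  have hunit : IsUnit (A 1 1) :=
    ⟨⟨A 1 1, A 1 (-1), by rw [hmul]; simp [hone], by rw [hmul]; simp [hone]⟩, rfl⟩
  obtain ⟨d, hd⟩ := bx_unip_end (A 1 1) hunit (by
    intro n hn
    have hn0 : (n : k) ≠ 0 := by exact_mod_cast hn.ne'
    refine ⟨⟨A (n : k)⁻¹ 0, A n 0, by rw [hmul]; simp [hone, hn0], by rw [hmul]; simp [hone, hn0]⟩, ?_⟩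
    change _ = A (n : k)⁻¹ 0 * A 1 1 * A n 0
    rw [hpow, hmul, hmul]
    simp [hn0])
  refine ⟨d, ?_⟩
  have key : ∀ m : ℕ, ∀ g : V, (((A 1 1 - 1) ^ m) g).1 = (fwdDiff (1 : k))^[m] g.1 := by
    intro m
    induction m with
    | zero => intro g; simp
    | succ m ih =>
      intro g
      rw [pow_succ, Module.End.mul_apply, ih, Function.iterate_succ_apply]
      congr 1
      ext x
      simp [fwdDiff, hA]
  have := key d ⟨f, hf⟩
  rw [hd] at this
  exact this.symm

theorem bx_poly {k : Type} [Field k] [CharZero k] (f : k → k) (d : ℕ)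
    (hd : (fwdDiff (1 : k))^[d] f = 0) : ∃ q : Polynomial k, ∀ n : ℕ, f n = q.eval (n : k) := by
  refine ⟨∑ j ∈ Finset.range d, Polynomial.C ((fwdDiff (1 : k))^[j] f 0 / (j.factorial : k)) *
    descPochhammer k j, fun n => ?_⟩
  have h := shift_eq_sum_fwdDiff_iter (1 : k) f n 0
  simp only [zero_add, nsmul_eq_mul, mul_one] at h
  rw [h, Polynomial.eval_finsetSum]
  have hz : ∀ j, d ≤ j → (fwdDiff (1 : k))^[j] f = 0 := by
    intro j hj
    obtain ⟨e, rfl⟩ := Nat.exists_eq_add_of_le' hj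
    rw [Function.iterate_add_apply, hd]
    exact Function.iterate_fixed (by ext; simp [fwdDiff]) e
  have hterm : ∀ j, Polynomial.eval (n : k) (Polynomial.C ((fwdDiff (1 : k))^[j] f 0 / (j.factorial : k)) *
    descPochhammer k j) = (n.choose j : k) * (fwdDiff (1 : k))^[j] f 0 := by
    intro j
    have hj : (j.factorial : k) ≠ 0 := by exact_mod_cast j.factorial_ne_zero
    rw [Polynomial.eval_mul, Polynomial.eval_C, descPochhammer_eval_eq_descFactorial,
      Nat.descFactorial_eq_factorial_mul_choose]
    push_cast
    field_simp
  simp only [hterm]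
  set N := max d (n + 1)
  trans ∑ j ∈ Finset.range N, (n.choose j : k) * (fwdDiff (1 : k))^[j] f 0
  · apply Finset.sum_subset (Finset.range_mono (le_max_right _ _))
    intro j _ hj
    rw [Nat.choose_eq_zero_of_lt (by simpa using hj)]; simp
  · symm
    apply Finset.sum_subset (Finset.range_mono (le_max_left _ _))
    intro j _ hj
    rw [hz j (by simpa using hj)]; simp

theorem bx_unique {k R : Type} [Field k] [CharZero k] [CommRing R] [Algebra k R]
    (p q : Polynomial R) (h : ∀ n : ℕ, p.eval (n : R) = q.eval (n : R)) : p = q := by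
  rw [← sub_eq_zero]
  set r := p - q with hr
  have hr0 : ∀ n : ℕ, r.eval (n : R) = 0 := fun n => by simp [hr, h n]
  ext j
  rw [Polynomial.coeff_zero, ← Module.forall_dual_apply_eq_zero_iff k]
  intro l
  let s : Polynomial k := ∑ i ∈ Finset.range (r.natDegree + 1), Polynomial.C (l (r.coeff i)) * Polynomial.X ^ i
  have hs : s = 0 := by
    apply Polynomial.eq_zero_of_infinite_isRoot
    refine (Set.infinite_range_of_injective (Nat.cast_injective (R := k))).mono ?_
    rintro _ ⟨n, rfl⟩
    have h1 := congrArg l (hr0 n)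
    rw [Polynomial.eval_eq_sum_range, map_sum, map_zero] at h1
    change s.eval (n : k) = 0
    simp only [s, Polynomial.eval_finsetSum, Polynomial.eval_mul, Polynomial.eval_C,
      Polynomial.eval_pow, Polynomial.eval_X]
    rw [← h1]
    refine Finset.sum_congr rfl fun i _ => ?_
    have : r.coeff i * (n : R) ^ i = ((n : k) ^ i) • r.coeff i := by
      rw [Algebra.smul_def]; simp [mul_comm]
    rw [this, map_smul, smul_eq_mul, mul_comm]
  by_cases hj : j ≤ r.natDegree
  · have := congrArg (fun t => Polynomial.coeff t j) hs
    simpa [s, Polynomial.finsetSum_coeff, Polynomial.coeff_C_mul, Polynomial.coeff_X_pow,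
      Nat.lt_succ_iff, hj] using this
  · rw [Polynomial.coeff_eq_zero_of_natDegree_lt (by omega), map_zero]

section bx
variable {k A : Type} [Field k] [CommRing A] [Algebra k A]

theorem bx_exists_sum {M N : Type} [CommRing M] [Algebra k M] [CommRing N] [Algebra k N]
    (z : M ⊗[k] N) : ∃ (n : ℕ) (x : Fin n → M) (y : Fin n → N), z = ∑ i, x i ⊗ₜ[k] y i := by
  obtain ⟨n, x, y, h⟩ := TensorProduct.exists_sum_tmul_eq z
  exact ⟨n, x, y, h⟩

theorem bx_ptOp_apply {R : Type} [CommRing R] [Algebra k R] (Δ : A →ₐ[k] A ⊗[k] A)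
    (f g : A →ₐ[k] R) {a : A} {n : ℕ} {x y : Fin n → A} (h : Δ a = ∑ i, x i ⊗ₜ[k] y i) :
    ptOp k A Δ f g a = ∑ i, f (x i) * g (y i) := by
  simp [ptOp, h]

theorem bx_ptConst_apply {R : Type} [CommRing R] [Algebra k R] (ε : A →ₐ[k] k) (a : A) :
    ptConst k A ε (R := R) a = algebraMap k R (ε a) := rfl

theorem bx_comp_ptOp {R R' : Type} [CommRing R] [Algebra k R] [CommRing R'] [Algebra k R']
    (Δ : A →ₐ[k] A ⊗[k] A) (f g : A →ₐ[k] R) (h : R →ₐ[k] R') :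
    h.comp (ptOp k A Δ f g) = ptOp k A Δ (h.comp f) (h.comp g) := by
  ext a
  obtain ⟨n, x, y, hz⟩ := bx_exists_sum (Δ a)
  rw [AlgHom.comp_apply, bx_ptOp_apply Δ _ _ hz, bx_ptOp_apply Δ _ _ hz]
  simp

theorem bx_comp_ptConst {R R' : Type} [CommRing R] [Algebra k R] [CommRing R'] [Algebra k R']
    (ε : A →ₐ[k] k) (h : R →ₐ[k] R') :
    h.comp (ptConst k A ε) = ptConst k A ε := by
  ext a
  simp [bx_ptConst_apply]

theorem bx_coadd_eq (Δ : A →ₐ[k] A ⊗[k] A) :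
    ptOp k A Δ Algebra.TensorProduct.includeLeft Algebra.TensorProduct.includeRight = Δ := by
  ext a
  obtain ⟨n, x, y, hz⟩ := bx_exists_sum (Δ a)
  rw [bx_ptOp_apply Δ _ _ hz, hz]
  simp

/-- multiplication by the scalar `s` -/
noncomputable def bxPsi (B : Bibiring k A) (s : k) : A →ₐ[k] A :=
  ptOp k A B.comul (AlgHom.id k A) (ptConst k A (B.beta s))

theorem bx_psi_comp (B : Bibiring k A) (s : k) {R : Type} [CommRing R] [Algebra k R]
    (f : A →ₐ[k] R) : f.comp (bxPsi B s) = ptOp k A B.comul f (ptConst k A (B.beta s)) := by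
  rw [bxPsi, bx_comp_ptOp, bx_comp_ptConst, AlgHom.comp_id]

theorem bx_psi_add (B : Bibiring k A) (s t : k) :
    bxPsi B (s + t) = ptOp k A B.coadd (bxPsi B s) (bxPsi B t) := by
  rw [bxPsi, bxPsi, bxPsi, ← B.pt_mul_add]
  congr 1
  rw [B.beta_add]
  exact bx_comp_ptOp _ _ _ _

theorem bx_psi_one (B : Bibiring k A) : bxPsi B 1 = AlgHom.id k A := by
  rw [bxPsi, B.beta_one, B.pt_mul_comm, B.pt_one_mul]

theorem bx_psi_zero (B : Bibiring k A) : bxPsi B 0 = ptConst k A B.counitAdd := by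
  have h := bx_psi_add B 0 0
  rw [add_zero] at h
  generalize bxPsi B 0 = z at h
  have h2 := congrArg (fun w => ptOp k A B.coadd w (z.comp B.antipode)) h
  simp only [B.pt_add_assoc, B.pt_add_neg] at h2
  rw [B.pt_add_comm, B.pt_zero_add] at h2
  exact h2.symm

theorem bx_coadd_psi (B : Bibiring k A) (s : k) :
    B.coadd.comp (bxPsi B s) = ptOp k A B.coadd
      (Algebra.TensorProduct.includeLeft.comp (bxPsi B s))
      (Algebra.TensorProduct.includeRight.comp (bxPsi B s)) := by
  rw [bx_psi_comp, bx_psi_comp, bx_psi_comp]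
  conv_lhs => rw [← bx_coadd_eq B.coadd]
  rw [B.pt_mul_comm, B.pt_mul_add, B.pt_mul_comm, B.pt_mul_comm _ (ptConst _ _ _)]

theorem bx_beta_poly [CharZero k] (B : Bibiring k A) (c : A) :
    ∃ q : Polynomial k, ∀ n : ℕ, B.beta n c = q.eval (n : k) := by
  let f : k → k := fun x => B.beta x c
  let g : k × k → (k → k) := fun p x => f (p.1 * x + p.2)
  let V : Submodule k (k → k) := Submodule.span k (Set.range g)
  have hV : ∀ f ∈ V, ∀ s t : k, (fun x => f (s * x + t)) ∈ V := by
    intro f hf s t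
    induction hf using Submodule.span_induction with
    | mem f hf =>
      obtain ⟨p, rfl⟩ := hf
      apply Submodule.subset_span
      refine ⟨(p.1 * s, p.1 * t + p.2), ?_⟩
      ext x
      simp only [g]
      ring_nf
    | zero => exact V.zero_mem
    | add f f' _ _ h h' => exact V.add_mem h h'
    | smul a f _ h => exact V.smul_mem a h
  have hfin : FiniteDimensional k V := by
    obtain ⟨n, u, v, hz⟩ := bx_exists_sum (B.coadd c)
    choose m p q hpq using fun i => bx_exists_sum (B.comul (u i))
    let w : (Σ i, Fin (m i)) → (k → k) := fun ij x => B.beta x (q ij.1 ij.2)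
    have hle : V ≤ Submodule.span k (Set.range w) := by
      apply Submodule.span_le.mpr
      rintro _ ⟨⟨s, t⟩, rfl⟩
      have : g (s, t) = ∑ i, ∑ j, (B.beta t (v i) * B.beta s (p i j)) • w ⟨i, j⟩ := by
        ext x
        simp only [g, f, w, B.beta_add, B.beta_mul, bx_ptOp_apply B.coadd _ _ hz,
          fun i => bx_ptOp_apply B.comul (B.beta s) (B.beta x) (hpq i), Finset.sum_apply,
          Pi.smul_apply, smul_eq_mul, Finset.sum_mul]
        refine Finset.sum_congr rfl fun i _ => Finset.sum_congr rfl fun j _ => by ring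
      rw [this]
      exact Submodule.sum_mem _ fun i _ => Submodule.sum_mem _ fun j _ =>
        Submodule.smul_mem _ _ (Submodule.subset_span ⟨_, rfl⟩)
    have : FiniteDimensional k (Submodule.span k (Set.range w)) :=
      FiniteDimensional.span_of_finite k (Set.finite_range w)
    exact Submodule.finiteDimensional_of_le hle
  have hf : f ∈ V := by
    apply Submodule.subset_span
    refine ⟨(1, 0), ?_⟩
    ext x
    simp [g]
  obtain ⟨d, hd⟩ := bx_fwdDiff V hV f hf
  exact bx_poly f d hd

theorem bx_psi_poly [CharZero k] (B : Bibiring k A) (a : A) :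
    ∃ p : Polynomial A, ∀ n : ℕ, p.eval (n : A) = bxPsi B n a := by
  obtain ⟨n, x, y, hz⟩ := bx_exists_sum (B.comul a)
  choose q hq using fun i => bx_beta_poly B (y i)
  refine ⟨∑ i, Polynomial.C (x i) * (q i).map (algebraMap k A), fun m => ?_⟩
  rw [bxPsi, bx_ptOp_apply B.comul _ _ hz, Polynomial.eval_finsetSum]
  refine Finset.sum_congr rfl fun i _ => ?_
  rw [bx_ptConst_apply, hq, Polynomial.eval_mul, Polynomial.eval_C, ← Polynomial.eval_natCast_map]
  simp

noncomputable def bxPhi [CharZero k] (B : Bibiring k A) (a : A) : Polynomial A :=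
  (bx_psi_poly B a).choose

theorem bx_phi_eval [CharZero k] (B : Bibiring k A) (a : A) (n : ℕ) :
    (bxPhi B a).eval (n : A) = bxPsi B n a := (bx_psi_poly B a).choose_spec n

theorem bx_phi_add [CharZero k] (B : Bibiring k A) (a b : A) :
    bxPhi B (a + b) = bxPhi B a + bxPhi B b :=
  bx_unique (k := k) _ _ fun n => by simp [bx_phi_eval]

theorem bx_phi_mul [CharZero k] (B : Bibiring k A) (a b : A) :
    bxPhi B (a * b) = bxPhi B a * bxPhi B b :=
  bx_unique (k := k) _ _ fun n => by simp [bx_phi_eval]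

theorem bx_phi_smul [CharZero k] (B : Bibiring k A) (c : k) (a : A) :
    bxPhi B (c • a) = c • bxPhi B a :=
  bx_unique (k := k) _ _ fun n => by simp [bx_phi_eval]

/-- the degree `j` component -/
noncomputable def bxPi [CharZero k] (B : Bibiring k A) (j : ℕ) : A →ₗ[k] A where
  toFun a := (bxPhi B a).coeff j
  map_add' a b := by simp [bx_phi_add]
  map_smul' a b := by simp [bx_phi_smul]

theorem bx_pi_zero [CharZero k] (B : Bibiring k A) (a : A) :
    bxPi B 0 a = algebraMap k A (B.counitAdd a) := by
  change (bxPhi B a).coeff 0 = _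
  have := bx_phi_eval B a 0
  rw [Nat.cast_zero, Nat.cast_zero, bx_psi_zero, bx_ptConst_apply] at this
  rw [Polynomial.coeff_zero_eq_eval_zero, this]

theorem bx_pi_sum [CharZero k] (B : Bibiring k A) (a : A) :
    a = ∑ j ∈ Finset.range ((bxPhi B a).natDegree + 1), bxPi B j a := by
  have := bx_phi_eval B a 1
  rw [Nat.cast_one, Nat.cast_one, bx_psi_one, Polynomial.eval_eq_sum_range] at this
  simpa [bxPi] using this.symm

theorem bx_pi_one_mul [CharZero k] (B : Bibiring k A) (a b : A) :
    bxPi B 1 (a * b) = algebraMap k A (B.counitAdd a) * bxPi B 1 b +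
      bxPi B 1 a * algebraMap k A (B.counitAdd b) := by
  rw [← bx_pi_zero, ← bx_pi_zero]
  change (bxPhi B (a * b)).coeff 1 = _
  rw [bx_phi_mul, Polynomial.mul_coeff_one]
  rfl

theorem bx_counit_left (B : Bibiring k A) {a : A} {n : ℕ} {x y : Fin n → A}
    (h : B.coadd a = ∑ i, x i ⊗ₜ[k] y i) : ∑ i, B.counitAdd (x i) • y i = a := by
  have := B.pt_zero_add A (AlgHom.id k A)
  have := congrArg (fun f => f a) this
  simpa [bx_ptOp_apply B.coadd _ _ h, bx_ptConst_apply, Algebra.smul_def] using this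

theorem bx_counit_right (B : Bibiring k A) {a : A} {n : ℕ} {x y : Fin n → A}
    (h : B.coadd a = ∑ i, x i ⊗ₜ[k] y i) : ∑ i, B.counitAdd (y i) • x i = a := by
  have := B.pt_zero_add A (AlgHom.id k A)
  rw [B.pt_add_comm] at this
  have := congrArg (fun f => f a) this
  simpa [bx_ptOp_apply B.coadd _ _ h, bx_ptConst_apply, Algebra.smul_def, mul_comm] using this

theorem bx_pi_one_prim [CharZero k] (B : Bibiring k A) (a : A) :
    bxPi B 1 a ∈ primitives k A B.toBiring := by
  obtain ⟨n, x, y, hz⟩ := bx_exists_sum (B.coadd a)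
  let i1 : A →ₐ[k] A ⊗[k] A := Algebra.TensorProduct.includeLeft
  let i2 : A →ₐ[k] A ⊗[k] A := Algebra.TensorProduct.includeRight
  have key : (bxPhi B a).map B.coadd.toRingHom =
      ∑ i, (bxPhi B (x i)).map i1.toRingHom * (bxPhi B (y i)).map i2.toRingHom := by
    apply bx_unique (k := k)
    intro m
    have h := congrArg (fun f => f a) (bx_coadd_psi B m)
    simp only [AlgHom.comp_apply] at h
    rw [bx_ptOp_apply B.coadd _ _ hz] at h
    simp only [Polynomial.eval_finsetSum, Polynomial.eval_mul, Polynomial.eval_natCast_map,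
      bx_phi_eval]
    exact h
  have h1 := congrArg (fun p => p.coeff 1) key
  simp only [Polynomial.finsetSum_coeff, Polynomial.mul_coeff_one, Polynomial.coeff_map] at h1
  change B.coadd (bxPi B 1 a) = ∑ i, (i1 (bxPi B 0 (x i)) * i2 (bxPi B 1 (y i)) +
    i1 (bxPi B 1 (x i)) * i2 (bxPi B 0 (y i))) at h1
  change B.coadd (bxPi B 1 a) = _
  rw [h1, Finset.sum_add_distrib, add_comm]
  congr 1
  · conv_rhs => rw [← bx_counit_right B hz, map_sum, TensorProduct.sum_tmul]
    refine Finset.sum_congr rfl fun i _ => ?_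
    simp only [i1, i2, bx_pi_zero, Algebra.TensorProduct.includeLeft_apply,
      Algebra.TensorProduct.includeRight_apply, Algebra.TensorProduct.tmul_mul_tmul, mul_one,
      Algebra.algebraMap_eq_smul_one, map_smul, TensorProduct.smul_tmul', mul_smul_comm]
  · conv_rhs => rw [← bx_counit_left B hz, map_sum, TensorProduct.tmul_sum]
    refine Finset.sum_congr rfl fun i _ => ?_
    simp only [i1, i2, bx_pi_zero, Algebra.TensorProduct.includeLeft_apply,
      Algebra.TensorProduct.includeRight_apply, Algebra.TensorProduct.tmul_mul_tmul, mul_one,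
      one_mul, Algebra.algebraMap_eq_smul_one, map_smul, TensorProduct.tmul_smul,
      TensorProduct.smul_tmul']

theorem bx_pi_succ [CharZero k] (B : Bibiring k A) {a : A} {n : ℕ} {x y : Fin n → A}
    (hz : B.coadd a = ∑ i, x i ⊗ₜ[k] y i) (j : ℕ) :
    bxPi B (j + 1) a * (j + 1) = ∑ i, bxPi B 1 (x i) * bxPi B j (y i) := by
  have key : (bxPhi B a).derivative = ∑ i, Polynomial.C (bxPi B 1 (x i)) * bxPhi B (y i) := by
    apply bx_unique (k := k)
    intro m
    have h1 : (bxPhi B a).comp (Polynomial.X + Polynomial.C (m : A)) =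
        ∑ i, bxPhi B (x i) * Polynomial.C (bxPsi B m (y i)) := by
      apply bx_unique (k := k)
      intro l
      have h2 := bx_phi_eval B a (l + m)
      rw [Nat.cast_add, Nat.cast_add, bx_psi_add, bx_ptOp_apply B.coadd _ _ hz] at h2
      simp only [Polynomial.eval_comp, Polynomial.eval_add, Polynomial.eval_X, Polynomial.eval_C,
        Polynomial.eval_finsetSum, Polynomial.eval_mul, bx_phi_eval]
      exact h2
    have h3 := congrArg (fun p => (Polynomial.derivative p).eval 0) h1
    simp only [Polynomial.derivative_comp, Polynomial.derivative_sum, Polynomial.derivative_mul,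
      Polynomial.eval_finsetSum, Polynomial.eval_mul, Polynomial.eval_comp] at h3
    simp [← Polynomial.coeff_zero_eq_eval_zero, Polynomial.coeff_derivative] at h3
    rw [h3, Polynomial.eval_finsetSum]
    refine Finset.sum_congr rfl fun i _ => ?_
    rw [Polynomial.eval_mul, Polynomial.eval_C, bx_phi_eval]
    rfl
  have h1 := congrArg (fun p => p.coeff j) key
  simpa [Polynomial.coeff_derivative, Polynomial.finsetSum_coeff, bxPi] using h1

theorem bx_adjoin [CharZero k] (B : Bibiring k A) (j : ℕ) (a : A) :
    bxPi B j a ∈ Algebra.adjoin k (primitives k A B.toBiring : Set A) := by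
  induction j generalizing a with
  | zero => rw [bx_pi_zero]; exact Subalgebra.algebraMap_mem _ _
  | succ j ih =>
    obtain ⟨n, x, y, hz⟩ := bx_exists_sum (B.coadd a)
    have h := bx_pi_succ B hz j
    have h0 : ((j : k) + 1) ≠ 0 := by exact_mod_cast j.succ_ne_zero
    have : bxPi B (j + 1) a = ((j : k) + 1)⁻¹ • ∑ i, bxPi B 1 (x i) * bxPi B j (y i) := by
      rw [← h, eq_inv_smul_iff₀ h0, Algebra.smul_def]
      simp [mul_comm]
    rw [this]
    exact Subalgebra.smul_mem _ (Subalgebra.sum_mem _ fun i _ =>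
      Subalgebra.mul_mem _ (Algebra.subset_adjoin (bx_pi_one_prim B _)) (ih _)) _

theorem bx_counit_prim (B : Bibiring k A) {p : A} (hp : p ∈ primitives k A B.toBiring) :
    B.counitAdd p = 0 := by
  have hp' : B.coadd p = p ⊗ₜ[k] (1 : A) + (1 : A) ⊗ₜ[k] p := hp
  have := congrArg (fun f => f p) (B.pt_zero_add k B.counitAdd)
  simp [ptOp, ptConst, hp'] at this
  exact this

theorem bx_pi_one_of_prim [CharZero k] (B : Bibiring k A) {p : A}
    (hp : p ∈ primitives k A B.toBiring) : bxPi B 1 p = p := by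
  have hp' : B.coadd p = p ⊗ₜ[k] (1 : A) + (1 : A) ⊗ₜ[k] p := hp
  have h : bxPhi B p = Polynomial.C p * Polynomial.X := by
    apply bx_unique (k := k)
    intro n
    rw [bx_phi_eval]
    induction n with
    | zero => simp [bx_psi_zero, bx_ptConst_apply, bx_counit_prim B hp]
    | succ n ih =>
      rw [Nat.cast_succ, bx_psi_add, bx_psi_one]
      simp [ptOp, hp', ih]
      ring
  change (bxPhi B p).coeff 1 = p
  simp [h]

/-- derivation attached to a functional -/
noncomputable def bxD [CharZero k] (B : Bibiring k A) (l : A →ₗ[k] k) : A →ₗ[k] A :=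
  (TensorProduct.rid k A).toLinearMap ∘ₗ (LinearMap.lTensor A (l ∘ₗ bxPi B 1)) ∘ₗ
    B.coadd.toLinearMap

theorem bx_D_apply [CharZero k] (B : Bibiring k A) (l : A →ₗ[k] k) {a : A} {n : ℕ}
    {x y : Fin n → A} (hz : B.coadd a = ∑ i, x i ⊗ₜ[k] y i) :
    bxD B l a = ∑ i, l (bxPi B 1 (y i)) • x i := by
  simp [bxD, hz]

theorem bx_D_mul [CharZero k] (B : Bibiring k A) (l : A →ₗ[k] k) (a b : A) :
    bxD B l (a * b) = a * bxD B l b + bxD B l a * b := by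
  obtain ⟨n, x, y, hz⟩ := bx_exists_sum (B.coadd a)
  obtain ⟨m, u, v, hw⟩ := bx_exists_sum (B.coadd b)
  rw [bx_D_apply B l hz, bx_D_apply B l hw]
  conv_rhs => rw [← bx_counit_right B hz, ← bx_counit_right B hw]
  have : bxD B l (a * b) = ∑ i, ∑ j, l (bxPi B 1 (y i * v j)) • (x i * u j) := by
    simp [bxD, hz, hw, Finset.sum_mul_sum]
  rw [this]
  simp only [Finset.sum_mul_sum, ← Finset.sum_add_distrib]
  refine Finset.sum_congr rfl fun i _ => Finset.sum_congr rfl fun j _ => ?_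
  have hl : l (bxPi B 1 (y i * v j)) = B.counitAdd (y i) * l (bxPi B 1 (v j)) +
      l (bxPi B 1 (y i)) * B.counitAdd (v j) := by
    rw [bx_pi_one_mul, mul_comm (bxPi B 1 (y i)), ← Algebra.smul_def, ← Algebra.smul_def,
      map_add, map_smul, map_smul, smul_eq_mul, smul_eq_mul, mul_comm (B.counitAdd (v j))]
  rw [hl, add_smul, smul_mul_smul_comm, smul_mul_smul_comm]

theorem bx_D_prim [CharZero k] (B : Bibiring k A) (l : A →ₗ[k] k) {p : A}
    (hp : p ∈ primitives k A B.toBiring) : bxD B l p = algebraMap k A (l p) := by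
  have hp' : B.coadd p = p ⊗ₜ[k] (1 : A) + (1 : A) ⊗ₜ[k] p := hp
  have h1 : bxPi B 1 1 = 0 := by
    have := bx_pi_one_mul B 1 1
    simpa using this
  simp [bxD, hp', h1, bx_pi_one_of_prim B hp, Algebra.algebraMap_eq_smul_one]

theorem bx_aeval_inj [CharZero k] (B : Bibiring k A) {σ : Type}
    (b : Module.Basis σ k (primitives k A B.toBiring)) (F : MvPolynomial σ k)
    (hF : MvPolynomial.aeval (fun i => (b i : A)) F = 0) : F = 0 := by
  classical
  have hD : ∀ (i : σ) (F : MvPolynomial σ k),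
      bxD B ((LinearMap.exists_extend (b.coord i)).choose)
        (MvPolynomial.aeval (fun i => (b i : A)) F) =
      MvPolynomial.aeval (fun i => (b i : A)) (MvPolynomial.pderiv i F) := by
    intro i F
    have hl := (LinearMap.exists_extend (b.coord i)).choose_spec
    generalize (LinearMap.exists_extend (b.coord i)).choose = l at hl
    have hl' : ∀ j, l (b j : A) = if j = i then 1 else 0 := by
      intro j
      have := congrArg (fun f => f (b j)) hl
      simpa [Finsupp.single_apply] using this
    induction F using MvPolynomial.induction_on with
    | C c =>
      have h1 : bxD B l 1 = 0 := by
        have := bx_D_mul B l 1 1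
        simpa using this
      simp [MvPolynomial.aeval_C, Algebra.algebraMap_eq_smul_one, h1]
    | add p q hp hq => simp [hp, hq]
    | mul_X p j hp =>
      rw [map_mul, bx_D_mul, hp, MvPolynomial.aeval_X, bx_D_prim B l (b j).2, hl',
        MvPolynomial.pderiv_mul, MvPolynomial.pderiv_X]
      by_cases hij : j = i
      · subst hij; simp [add_comm]
      · simp [hij, Pi.single_apply]
  have hker : ∀ (i : σ) (F : MvPolynomial σ k), MvPolynomial.aeval (fun i => (b i : A)) F = 0 →
      MvPolynomial.aeval (fun i => (b i : A)) (MvPolynomial.pderiv i F) = 0 := by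
    intro i F h
    rw [← hD, h, map_zero]
  have h0 : ∀ F : MvPolynomial σ k, MvPolynomial.aeval (fun i => (b i : A)) F = 0 →
      MvPolynomial.coeff 0 F = 0 := by
    intro F h
    have h1 : B.counitAdd (MvPolynomial.aeval (fun i => (b i : A)) F) =
        MvPolynomial.constantCoeff F := by
      clear h
      induction F using MvPolynomial.induction_on with
      | C c => simp
      | add p q hp hq => simp [hp, hq]
      | mul_X p j hp => simp [bx_counit_prim B (b j).2]
    rw [h, map_zero] at h1
    exact h1.symm
  have hm : ∀ m m' : σ →₀ ℕ,
      (∀ F : MvPolynomial σ k, MvPolynomial.aeval (fun i => (b i : A)) F = 0 →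
        MvPolynomial.coeff m' F = 0) →
      (∀ F : MvPolynomial σ k, MvPolynomial.aeval (fun i => (b i : A)) F = 0 →
        MvPolynomial.coeff (m' + m) F = 0) := by
    intro m
    induction m using Finsupp.induction_linear with
    | zero => intro m' h; simpa using h
    | add f g hf hg =>
      intro m' h
      rw [← add_assoc]
      exact hg _ (hf _ h)
    | single i n =>
      induction n with
      | zero => intro m' h; simpa using h
      | succ n ih =>
        intro m' h F hF
        have h1 := ih m' h _ (hker i F hF)
        rw [MvPolynomial.coeff_pderiv, mul_eq_zero] at h1
        rw [Finsupp.single_add, ← add_assoc]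
        refine h1.resolve_right ?_
        exact Nat.cast_add_one_ne_zero _
  ext m
  have := hm m 0 h0 F hF
  simpa using this
end bx

/-- **Theorem 4.5** (underlying-algebra content): every plethory over a field of
characteristic zero is linear.  For a `k`-`k`-biring `A` over a field `k` of characteristic
zero with submodule of primitives `P`, the canonical `k`-algebra homomorphism
`Sym_k(P) → A` extending the inclusion `P ↪ A` is bijective; here `Sym_k(P)` is any
commutative `k`-algebra `S` with a linear map `ι : P → S` satisfying the universal property
of the symmetric algebra.  In particular `A` is a polynomial algebra on any `k`-basis
of `P`. -/
theorem biring_char_zero_symmetric_on_primitives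
    (k A : Type) [Field k] [CharZero k] [CommRing A] [Algebra k A]
    (B : Bibiring k A)
    (S : Type) [CommRing S] [Algebra k S]
    (ι : primitives k A B.toBiring →ₗ[k] S)
    (huniv : ∀ (C : Type) [CommRing C] [Algebra k C]
      (φ : primitives k A B.toBiring →ₗ[k] C),
      ∃! g : S →ₐ[k] C, g.toLinearMap ∘ₗ ι = φ)
    (v : S →ₐ[k] A)
    (hv : v.toLinearMap ∘ₗ ι = (primitives k A B.toBiring).subtype) :
    Function.Bijective v := by
  let P := primitives k A B.toBiring
  let b := Module.Basis.ofVectorSpace k P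
  let e := MvPolynomial.aeval (R := k) (fun i => ι (b i))
  have hvι : ∀ p, v (ι p) = (p : A) := fun p => congrArg (fun f => f p) hv
  have hve : v.comp e = MvPolynomial.aeval (fun i => (b i : A)) := by
    ext i
    simp [e, hvι]
  obtain ⟨g, hg, -⟩ := huniv _ (b.constr k (fun i => (MvPolynomial.X i : MvPolynomial _ k)))
  have hgι : ∀ i, g (ι (b i)) = MvPolynomial.X i := by
    intro i
    have := congrArg (fun f => f (b i)) hg
    simpa using this
  have heg : e.comp g = AlgHom.id k S := by
    obtain ⟨w, -, hw⟩ := huniv S ι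
    rw [hw (e.comp g) ?_, hw (AlgHom.id k S) ?_]
    · ext; rfl
    · apply b.ext
      intro i
      simp [hgι, e]
  constructor
  · rw [injective_iff_map_eq_zero]
    intro s hs
    have h1 : e (g s) = s := congrArg (fun f => f s) heg
    have h2 : MvPolynomial.aeval (fun i => (b i : A)) (g s) = 0 := by
      rw [← hve, AlgHom.comp_apply, h1, hs]
    rw [← h1, bx_aeval_inj B b (g s) h2, map_zero]
  · intro a
    have hle : Algebra.adjoin k (primitives k A B.toBiring : Set A) ≤ v.range := by
      rw [Algebra.adjoin_le_iff]
      intro p hp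
      exact ⟨ι ⟨p, hp⟩, hvι ⟨p, hp⟩⟩
    have ha : a ∈ v.range := by
      apply hle
      rw [bx_pi_sum B a]
      exact Subalgebra.sum_mem _ fun j _ => bx_adjoin B j a
    exact ha
end
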